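/- arXiv:2104.13688 — 2 statements merged into one kernel-verified Lean document; each statement's English description precedes it below -/
import Mathlib

section
/- Let (X, L) be a finite-to-one biautomatic structure on ℤ^N. Then there exist a polyhedral function f : ℝ^N → ℝ and a constant ξ ≥ 0 such that f(Ū) − ξ ≤ |U| ≤ f(Ū) + ξ for every word U ∈ L, where Ū ∈ ℤ^N ⊆ ℝ^N is the element represented by U and |U| its length. -/
/-!
Let `M` be a finite automaton accepting the language. A loop of `M` at a live state `q` can be
pumped, and two loops `w`, `w'` at `q` can be pumped in either order, giving two words for the same
element; the fellow traveller property then forces `w̄ / |w| = w̄' / |w'|` (`loop_velocity`). So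
each state `q` lying on a loop has a well-defined velocity `v_q`. Cutting loops out of a word `U` of the
language gives, up to a bounded error, `Ū = ∑ t_q v_q` and `|U| = ∑ t_q` with `t ≥ 0` supported on
a set of states visited by `U` (`exists_decomposition`); conversely, inserting loops realises every
such combination up to a bounded error (`exists_pump`). Only finitely many sets of states occur, and
they span finitely many cones.

Being finite-to-one forbids nonempty loops representing `0`, so a pigeonhole argument shows that the
length of a word of the language is a coarsely Lipschitz function of the element it represents
(`length_lipschitz`). Scaling by `n` and letting `n` grow removes the bounded errors
(`polyhedral_of_coarse`): `∑ t_q` depends only on the vector `∑ t_q v_q`, even across different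
cones, and a compactness argument shows that the cones cover `ℝ^N`. Hence `∑ t_q v_q ↦ ∑ t_q` is a
well-defined function on `ℝ^N`. It is linear on each cone since it takes the value `1` on every
`v_q` (`exists_inner_eq_one`), and it is positive off the origin, so it is polyhedral
(`exists_polyhedral`). One further use of the Lipschitz property compares it with the length.
-/

/-- The element of `ℤ^N` represented by a word over the alphabet `X`, via the letter map `π`. -/
def wordSum {N : ℕ} {X : Type*} (π : X → (Fin N → ℤ)) (U : List X) : Fin N → ℤ :=
  (U.map π).sum

/-- A biautomatic structure on the free abelian group `ℤ^N`. -/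
structure ZBiautomaticStructure (N : ℕ) where
  /-- the alphabet -/
  X : Type
  fintypeX : Fintype X
  /-- the letter map -/
  π : X → (Fin N → ℤ)
  inj : Function.Injective π
  symm : ∀ x : X, ∃ x' : X, π x' = -(π x)
  hasZero : ∃ x : X, π x = 0
  gen : AddSubgroup.closure (Set.range π) = ⊤
  /-- the language -/
  L : Language X
  regular : L.IsRegular
  represents : ∀ v : Fin N → ℤ, ∃ U ∈ L, wordSum π U = v
  fellowTraveller : ∃ lam : ℕ, ∀ U ∈ L, ∀ V ∈ L, ∀ x y : X,
    wordSum π U = π x + wordSum π V + π y →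
    ∀ t : ℕ, ∃ W : List X,
      wordSum π W = wordSum π (U.take t) - π x - wordSum π (V.take t) ∧
      W.length ≤ lam

/-- A biautomatic structure on `ℤ^N` is finite-to-one if every element of `ℤ^N` is represented
by only finitely many words of the language. -/
def ZBiautomaticStructure.FiniteToOne {N : ℕ} (B : ZBiautomaticStructure N) : Prop :=
  ∀ v : Fin N → ℤ, {U | U ∈ B.L ∧ wordSum B.π U = v}.Finite

open RealInnerProductSpace

noncomputable section

/-- The polyhedral cone over the finite family of vectors `z i`: all nonnegative
linear combinations of the `z i`. -/
def coneOverFam {n k : ℕ} (z : Fin k → EuclideanSpace ℝ (Fin n)) :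
    Set (EuclideanSpace ℝ (Fin n)) :=
  {v | ∃ c : Fin k → ℝ, (∀ i, 0 ≤ c i) ∧ v = ∑ i, c i • z i}

/-- A subset of `ℝ^n` is a polyhedral cone if it is the cone over some finite set of vectors. -/
def IsPolyhedralCone {n : ℕ} (C : Set (EuclideanSpace ℝ (Fin n))) : Prop :=
  ∃ (k : ℕ) (z : Fin k → EuclideanSpace ℝ (Fin n)), C = coneOverFam z

/-- The function `f_{C,y}`, equal to `⟨v, y⟩` on `C` and `0` elsewhere. -/
def coneFn {n : ℕ} (C : Set (EuclideanSpace ℝ (Fin n))) (y : EuclideanSpace ℝ (Fin n)) :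
    EuclideanSpace ℝ (Fin n) → ℝ :=
  C.indicator (fun v => ⟪v, y⟫)

/-- `f : ℝ^n → ℝ` is a polyhedral function if it is the pointwise maximum of finitely many
functions `f_{C_j, y_j}` whose polyhedral cones `C_j` cover `ℝ^n`, where `⟨z, y_j⟩ > 0` for all
nonzero `z ∈ C_j`, and where `⟨v, y_j⟩ = ⟨v, y_k⟩` whenever `v ∈ C_j ∩ C_k`. -/
def IsPolyhedral {n : ℕ} (f : EuclideanSpace ℝ (Fin n) → ℝ) : Prop :=
  ∃ (m : ℕ) (C : Fin m → Set (EuclideanSpace ℝ (Fin n))) (y : Fin m → EuclideanSpace ℝ (Fin n)),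
    (∀ j, IsPolyhedralCone (C j)) ∧
    (∀ j, ∀ z ∈ C j, z ≠ 0 → 0 < ⟪z, y j⟫) ∧
    (⋃ j, C j) = Set.univ ∧
    (∀ j k : Fin m, ∀ v, v ∈ C j → v ∈ C k → ⟪v, y j⟫ = ⟪v, y k⟫) ∧
    (∀ v, f v = ⨆ j, coneFn (C j) (y j) v)

end

/-- The canonical inclusion of `ℤ^N` in `ℝ^N` (as Euclidean space). -/
noncomputable def intToEuc {N : ℕ} (w : Fin N → ℤ) : EuclideanSpace ℝ (Fin N) :=
  (WithLp.equiv 2 (Fin N → ℝ)).symm (fun i => (w i : ℝ))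

/-! ### Polyhedral functions from cones spanned by finitely many vectors -/

section Geometry

open scoped Classical

variable {N : ℕ} {σ : Type}

/-- The cone spanned by the vectors `v q` with `q ∈ S`. -/
def spanCone (v : σ → EuclideanSpace ℝ (Fin N)) (S : Finset σ) :
    Set (EuclideanSpace ℝ (Fin N)) :=
  {x | ∃ c : σ → ℝ, (∀ q, 0 ≤ c q) ∧ x = ∑ q ∈ S, c q • v q}

lemma isPolyhedralCone_spanCone [Fintype σ] (v : σ → EuclideanSpace ℝ (Fin N)) (S : Finset σ) :
    IsPolyhedralCone (spanCone v S) := by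
  let e := Fintype.equivFin σ
  refine ⟨Fintype.card σ, fun i => if e.symm i ∈ S then v (e.symm i) else 0, ?_⟩
  ext x
  constructor
  · rintro ⟨c, hc, rfl⟩
    refine ⟨fun i => c (e.symm i), fun i => hc _, ?_⟩
    rw [Equiv.sum_comp e.symm (fun q => c q • if q ∈ S then v q else 0)]
    simp [Finset.sum_ite_mem]
  · rintro ⟨c, hc, rfl⟩
    refine ⟨fun q => c (e q), fun q => hc _, ?_⟩
    rw [← Equiv.sum_comp e]
    simp [Finset.sum_ite_mem]

/-- If every linear relation among the `v q`, `q ∈ S`, has coefficient sum zero, then some linear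
functional takes the value `1` on all of them. -/
lemma exists_inner_eq_one (v : σ → EuclideanSpace ℝ (Fin N)) (S : Finset σ)
    (h : ∀ a : σ → ℝ, ∑ q ∈ S, a q • v q = 0 → ∑ q ∈ S, a q = 0) :
    ∃ y : EuclideanSpace ℝ (Fin N), ∀ q ∈ S, ⟪v q, y⟫ = 1 := by
  let L : Fin N → ((σ → ℝ) →ₗ[ℝ] ℝ) := fun i => ∑ q ∈ S, v q i • LinearMap.proj q
  let K : (σ → ℝ) →ₗ[ℝ] ℝ := ∑ q ∈ S, LinearMap.proj q
  have hK : K ∈ Submodule.span ℝ (Set.range L) := by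
    apply mem_span_of_iInf_ker_le_ker
    intro a ha
    simp only [Submodule.mem_iInf, LinearMap.mem_ker] at ha
    rw [LinearMap.mem_ker]
    have := h a (by
      ext i
      simpa [L, mul_comm] using ha i)
    simpa [K] using this
  obtain ⟨y, hy⟩ := (Submodule.mem_span_range_iff_exists_fun ℝ).1 hK
  refine ⟨WithLp.toLp 2 y, fun q hq => ?_⟩
  have := congrArg (fun T => T (Pi.single q (1 : ℝ))) hy
  simp [L, K, Pi.single_apply, hq] at this
  simpa [PiLp.inner_apply] using this

/-- If the coefficient sum of a nonnegative combination over a member of `𝒮` depends only on the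
vector it represents, and the cones over the members of `𝒮` cover the space, then the
coefficient sum is a polyhedral function. -/
lemma exists_polyhedral [Fintype σ] (v : σ → EuclideanSpace ℝ (Fin N)) (𝒮 : Finset (Finset σ))
    (hwd : ∀ S ∈ 𝒮, ∀ T ∈ 𝒮, ∀ s t : σ → ℝ, (∀ q, 0 ≤ s q) → (∀ q, 0 ≤ t q) →
      ∑ q ∈ S, s q • v q = ∑ q ∈ T, t q • v q → ∑ q ∈ S, s q = ∑ q ∈ T, t q)
    (hcov : ∀ x, ∃ S ∈ 𝒮, x ∈ spanCone v S) :
    ∃ f, IsPolyhedral f ∧ ∀ S ∈ 𝒮, ∀ s : σ → ℝ, (∀ q, 0 ≤ s q) →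
      f (∑ q ∈ S, s q • v q) = ∑ q ∈ S, s q := by
  have hy : ∀ S : 𝒮, ∃ y : EuclideanSpace ℝ (Fin N), ∀ q ∈ S.1, ⟪v q, y⟫ = 1 := by
    rintro ⟨S, hS⟩
    apply exists_inner_eq_one
    intro a ha
    -- Splitting the relation into positive and negative parts compares two points of the cone.
    have h1 : ∀ q, a q = max (a q) 0 - max (-a q) 0 := by
      intro q
      rcases le_total 0 (a q) with h | h <;> simp [h]
    have h2 := hwd S hS S hS (fun q => max (a q) 0) (fun q => max (-a q) 0)
      (fun q => le_max_right _ _) (fun q => le_max_right _ _) (by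
        rw [← sub_eq_zero, ← Finset.sum_sub_distrib, ← ha]
        refine Finset.sum_congr rfl fun q _ => ?_
        rw [← sub_smul, ← h1])
    rw [← sub_eq_zero, ← Finset.sum_sub_distrib] at h2
    rw [← h2]
    exact Finset.sum_congr rfl fun q _ => h1 q
  choose y hy using hy
  have hval : ∀ (S : 𝒮) (s : σ → ℝ), ⟪∑ q ∈ S.1, s q • v q, y S⟫ = ∑ q ∈ S.1, s q := by
    intro S s
    rw [sum_inner]
    refine Finset.sum_congr rfl fun q hq => ?_
    rw [real_inner_smul_left, hy S q hq, mul_one]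
  let e := Fintype.equivFin 𝒮
  have hpoly : ∀ (S : 𝒮) (s : σ → ℝ), (∀ q, 0 ≤ s q) →
      (⨆ j, coneFn (spanCone v (e.symm j).1) (y (e.symm j)) (∑ q ∈ S.1, s q • v q))
        = ∑ q ∈ S.1, s q := by
    intro S s hs
    have hle : ∀ j, coneFn (spanCone v (e.symm j).1) (y (e.symm j)) (∑ q ∈ S.1, s q • v q)
        ≤ ∑ q ∈ S.1, s q := by
      intro j
      unfold coneFn
      by_cases h : ∑ q ∈ S.1, s q • v q ∈ spanCone v (e.symm j).1
      · rw [Set.indicator_of_mem h]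
        obtain ⟨c, hc, hceq⟩ := h
        rw [hceq, hval]
        exact (hwd _ S.2 _ (e.symm j).2 s c hs hc hceq).symm.le
      · rw [Set.indicator_of_notMem h]
        exact Finset.sum_nonneg fun q _ => hs q
    have : Nonempty (Fin (Fintype.card 𝒮)) := ⟨e S⟩
    apply le_antisymm (ciSup_le hle)
    refine le_ciSup_of_le ⟨_, Set.forall_mem_range.2 hle⟩ (e S) ?_
    have hm : ∑ q ∈ S.1, s q • v q ∈ spanCone v (e.symm (e S)).1 := by
      rw [Equiv.symm_apply_apply]; exact ⟨s, hs, rfl⟩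
    unfold coneFn
    rw [Set.indicator_of_mem hm, Equiv.symm_apply_apply, hval]
  refine ⟨fun x => ⨆ j, coneFn (spanCone v (e.symm j).1) (y (e.symm j)) x,
    ⟨_, fun j => spanCone v (e.symm j).1, fun j => y (e.symm j),
      fun j => isPolyhedralCone_spanCone v _, ?_, ?_, ?_, fun _ => rfl⟩,
    fun S hS s hs => hpoly ⟨S, hS⟩ s hs⟩
  · rintro j z ⟨c, hc, rfl⟩ hz
    rw [hval]
    refine lt_of_le_of_ne (Finset.sum_nonneg fun q _ => hc q) fun h0 => hz ?_
    have h0' := (Finset.sum_eq_zero_iff_of_nonneg (fun q _ => hc q)).1 h0.symm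
    exact Finset.sum_eq_zero fun q hq => by rw [h0' q hq, zero_smul]
  · refine Set.eq_univ_of_forall fun x => ?_
    obtain ⟨S, hS, hx⟩ := hcov x
    exact Set.mem_iUnion.2 ⟨e ⟨S, hS⟩, by simpa using hx⟩
  · rintro j k x ⟨c, hc, rfl⟩ ⟨d, hd, hcd⟩
    rw [hval, hcd, hval]
    exact hwd _ (e.symm j).2 _ (e.symm k).2 c d hc hd hcd

/-- The coarse-to-exact principle. Pairs `(g, l)` stand for an element of `ℤ^N` and the length of a
word representing it. Suppose the length is coarsely Lipschitz in the element and that, up to a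
bounded error, the pairs are exactly the `(∑ q ∈ S, t q • v q, ∑ q ∈ S, t q)` with `t ≥ 0` and `S`
in the finite family `𝒮`. Then the length is within bounded distance of a polyhedral function. -/
lemma polyhedral_of_coarse [Fintype σ] (P : (Fin N → ℤ) → ℝ → Prop)
    (v : σ → EuclideanSpace ℝ (Fin N)) (𝒮 : Finset (Finset σ)) (K : ℝ) (hK : 0 ≤ K)
    (hrep : ∀ g, ∃ l, P g l)
    (hlip : ∀ g l g' l', P g l → P g' l' → |l - l'| ≤ K * (1 + ‖intToEuc g - intToEuc g'‖))
    (hdec : ∀ g l, P g l → ∃ S ∈ 𝒮, ∃ t : σ → ℝ, (∀ q, 0 ≤ t q) ∧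
      ‖intToEuc g - ∑ q ∈ S, t q • v q‖ ≤ K ∧ |l - ∑ q ∈ S, t q| ≤ K)
    (hpump : ∀ S ∈ 𝒮, ∀ t : σ → ℝ, (∀ q, 0 ≤ t q) → ∃ g l, P g l ∧
      ‖intToEuc g - ∑ q ∈ S, t q • v q‖ ≤ K ∧ |l - ∑ q ∈ S, t q| ≤ K) :
    ∃ (f : EuclideanSpace ℝ (Fin N) → ℝ) (ξ : ℝ), IsPolyhedral f ∧ 0 ≤ ξ ∧
      ∀ g l, P g l → f (intToEuc g) - ξ ≤ l ∧ l ≤ f (intToEuc g) + ξ := by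
  have hwd : ∀ S ∈ 𝒮, ∀ T ∈ 𝒮, ∀ s t : σ → ℝ, (∀ q, 0 ≤ s q) → (∀ q, 0 ≤ t q) →
      ∑ q ∈ S, s q • v q = ∑ q ∈ T, t q • v q → ∑ q ∈ S, s q = ∑ q ∈ T, t q := by
    intro S hS T hT s t hs ht hst
    -- Scaling by `n` keeps the error bounded.
    have key : ∀ n : ℕ, n * |∑ q ∈ S, s q - ∑ q ∈ T, t q| ≤ K + K + K * (1 + (K + K)) := by
      intro n
      obtain ⟨g, l, hP, h1, h2⟩ := hpump S hS (fun q => n * s q)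
        (fun q => mul_nonneg n.cast_nonneg (hs q))
      obtain ⟨g', l', hP', h1', h2'⟩ := hpump T hT (fun q => n * t q)
        (fun q => mul_nonneg n.cast_nonneg (ht q))
      simp only [mul_smul, ← Finset.smul_sum, ← Finset.mul_sum] at h1 h2 h1' h2'
      rw [← hst] at h1'
      have h3 : ‖intToEuc g - intToEuc g'‖ ≤ K + K := by
        calc _ ≤ _ := norm_sub_le_norm_sub_add_norm_sub _ ((n : ℝ) • ∑ q ∈ S, s q • v q) _
          _ ≤ K + K := by rw [norm_sub_rev _ (intToEuc g')]; exact add_le_add h1 h1'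
      have h4 := hlip _ _ _ _ hP hP'
      have h5 : K * (1 + ‖intToEuc g - intToEuc g'‖) ≤ K * (1 + (K + K)) := by gcongr
      have h6 : (n : ℝ) * |∑ q ∈ S, s q - ∑ q ∈ T, t q|
          = |n * ∑ q ∈ S, s q - n * ∑ q ∈ T, t q| := by
        rw [← mul_sub, abs_mul, Nat.abs_cast]
      rw [h6]
      rw [abs_le] at *
      constructor <;> linarith [h2.1, h2.2, h2'.1, h2'.2, h4.1, h4.2]
    by_contra hne
    have hpos : 0 < |∑ q ∈ S, s q - ∑ q ∈ T, t q| := abs_pos.2 (sub_ne_zero.2 hne)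
    obtain ⟨n, hn⟩ := exists_nat_gt ((K + K + K * (1 + (K + K))) / |∑ q ∈ S, s q - ∑ q ∈ T, t q|)
    rw [div_lt_iff₀ hpos] at hn
    exact absurd (key n) (not_le.2 hn)
  have hcov : ∀ x, ∃ S ∈ 𝒮, x ∈ spanCone v S := by
    intro x
    obtain ⟨l₀, hl₀⟩ := hrep 0
    let g : ℕ → (Fin N → ℤ) := fun n i => ⌊((n : ℝ) + 1) * x i⌋
    let D : ℝ := ∑ _i : Fin N, 1
    have hD : 0 ≤ D := by positivity
    have hg : ∀ n, ‖intToEuc (g n) - ((n : ℝ) + 1) • x‖ ≤ D := by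
      intro n
      rw [EuclideanSpace.norm_eq]
      refine (Real.sqrt_le_sqrt (y := D ^ 2) ?_).trans (Real.sqrt_sq hD).le
      have hone : ∀ i, ‖(intToEuc (g n) - ((n : ℝ) + 1) • x) i‖ ^ 2 ≤ 1 := by
        intro i
        have : (intToEuc (g n) - ((n : ℝ) + 1) • x) i = -Int.fract (((n : ℝ) + 1) * x i) := by
          rw [← Int.self_sub_floor, neg_sub]
          simp [intToEuc, g]
        rw [this, norm_neg, Real.norm_eq_abs, sq_abs]
        nlinarith [Int.fract_nonneg (((n : ℝ) + 1) * x i), Int.fract_lt_one (((n : ℝ) + 1) * x i)]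
      refine (Finset.sum_le_sum fun i _ => hone i).trans ?_
      simp only [D, Finset.sum_const, Finset.card_univ, Fintype.card_fin, nsmul_eq_mul, mul_one]
      exact_mod_cast Nat.le_self_pow two_ne_zero N
    let M : ℝ := K + |l₀| + K * (1 + D + ‖x‖)
    have hclosed : IsClosed (⋃ S ∈ 𝒮, (fun c : σ → ℝ => ∑ q ∈ S, c q • v q) ''
        Set.Icc (fun _ => 0) (fun _ => M)) := by
      refine 𝒮.finite_toSet.isClosed_biUnion fun S _ => IsCompact.isClosed ?_
      refine isCompact_Icc.image ?_
      fun_prop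
    have happrox : ∀ n : ℕ, ∃ p ∈ (⋃ S ∈ 𝒮, (fun c : σ → ℝ => ∑ q ∈ S, c q • v q) ''
        Set.Icc (fun _ => 0) (fun _ => M)), ‖p - x‖ ≤ (K + D) * (1 / ((n : ℝ) + 1)) := by
      intro n
      have hn : (0 : ℝ) < (n : ℝ) + 1 := by positivity
      obtain ⟨l, hl⟩ := hrep (g n)
      obtain ⟨S, hS, t, ht, h1, h2⟩ := hdec _ _ hl
      have h3 := hlip _ _ _ _ hl hl₀
      have h0 : intToEuc (0 : Fin N → ℤ) = 0 := by ext i; simp [intToEuc]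
      rw [h0, sub_zero] at h3
      have h4 : ‖intToEuc (g n)‖ ≤ D + (n + 1) * ‖x‖ := by
        have := norm_le_norm_sub_add (intToEuc (g n)) (((n : ℝ) + 1) • x)
        rw [norm_smul, Real.norm_of_nonneg hn.le] at this
        linarith [hg n]
      have h5 : ∑ q ∈ S, t q ≤ (n + 1) * M := by
        have h6 : K * (1 + ‖intToEuc (g n)‖) ≤ K * (1 + (D + (n + 1) * ‖x‖)) := by gcongr
        have h7 : ∑ q ∈ S, t q ≤ K + |l₀| + K * (1 + (D + (n + 1) * ‖x‖)) := by
          have := (abs_le.1 h2).1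
          have := (abs_le.1 h3).2
          have := le_abs_self l₀
          linarith
        have h8 : 0 ≤ n * (K + |l₀| + K * (1 + D)) := by positivity
        simp only [M]
        nlinarith
      refine ⟨((n : ℝ) + 1)⁻¹ • ∑ q ∈ S, t q • v q, ?_, ?_⟩
      · refine Set.mem_biUnion hS ⟨fun q => if q ∈ S then ((n : ℝ) + 1)⁻¹ * t q else 0,
          ⟨?_, ?_⟩, ?_⟩
        · intro q
          have := ht q
          dsimp only
          split_ifs <;> positivity
        · intro q
          dsimp only
          split_ifs with hq
          · rw [inv_mul_le_iff₀ hn]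
            exact (Finset.single_le_sum (fun q _ => ht q) hq).trans h5
          · positivity
        · dsimp only
          rw [Finset.smul_sum]
          refine Finset.sum_congr rfl fun q hq => ?_
          rw [if_pos hq, mul_smul]
      · have h6 : ((n : ℝ) + 1)⁻¹ • ∑ q ∈ S, t q • v q - x
            = ((n : ℝ) + 1)⁻¹ • (∑ q ∈ S, t q • v q - ((n : ℝ) + 1) • x) := by
          rw [smul_sub, inv_smul_smul₀ hn.ne']
        rw [h6, norm_smul, norm_inv, Real.norm_of_nonneg hn.le, one_div, mul_comm]
        gcongr
        calc _ ≤ _ := norm_sub_le_norm_sub_add_norm_sub _ (intToEuc (g n)) _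
          _ ≤ K + D := by rw [norm_sub_rev _ (intToEuc (g n))]; exact add_le_add h1 (hg n)
    choose p hp hpx using happrox
    have hlim : Filter.Tendsto p Filter.atTop (nhds x) := by
      rw [tendsto_iff_norm_sub_tendsto_zero]
      refine squeeze_zero (fun _ => norm_nonneg _) hpx ?_
      simpa using (tendsto_one_div_add_atTop_nhds_zero_nat (𝕜 := ℝ)).const_mul (K + D)
    have hx := hclosed.mem_of_tendsto hlim (Filter.Eventually.of_forall hp)
    obtain ⟨S, hS, c, hc, hcx⟩ := Set.mem_iUnion₂.1 hx
    exact ⟨S, hS, c, hc.1, hcx.symm⟩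
  obtain ⟨f, hf, hfS⟩ := exists_polyhedral v 𝒮 hwd hcov
  refine ⟨f, K + K * (1 + K), hf, by positivity, fun g l hl => ?_⟩
  obtain ⟨S, hS, s, hs, hgs⟩ := hcov (intToEuc g)
  obtain ⟨g', l', hl', h1, h2⟩ := hpump S hS s hs
  rw [← hgs, norm_sub_rev] at h1
  have h3 := hlip _ _ _ _ hl hl'
  have h4 : K * (1 + ‖intToEuc g - intToEuc g'‖) ≤ K * (1 + K) := by gcongr
  rw [hgs, hfS S hS s hs]
  rw [abs_le] at h2 h3
  constructor <;> linarith [h2.1, h2.2, h3.1, h3.2]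

end Geometry

/-! ### Words, loops and the fellow traveller property -/

section Words

variable {N : ℕ} {X : Type*} (π : X → (Fin N → ℤ))

@[simp] lemma wordSum_nil : wordSum π [] = 0 := rfl

@[simp] lemma wordSum_append (U V : List X) : wordSum π (U ++ V) = wordSum π U + wordSum π V := by
  simp [wordSum]

/-- The `n`-fold power of a word. -/
def wpow (w : List X) (n : ℕ) : List X := (List.replicate n w).flatten

@[simp] lemma wpow_length (w : List X) (n : ℕ) : (wpow w n).length = n * w.length := by
  simp [wpow]

lemma wpow_succ (w : List X) (n : ℕ) : wpow w (n + 1) = w ++ wpow w n := by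
  simp [wpow, List.replicate_succ]

@[simp] lemma wordSum_wpow (w : List X) (n : ℕ) : wordSum π (wpow w n) = n • wordSum π w := by
  induction n with
  | zero => simp [wpow]
  | succ n ih => rw [wpow_succ, wordSum_append, ih, succ_nsmul']

lemma evalFrom_wpow {σ : Type*} (M : DFA X σ) {q : σ} {w : List X} (h : M.evalFrom q w = q)
    (n : ℕ) : M.evalFrom q (wpow w n) = q := by
  induction n with
  | zero => simp [wpow]
  | succ n ih => rw [wpow_succ, DFA.evalFrom_of_append, h, ih]

lemma eval_append {σ : Type*} (M : DFA X σ) (U V : List X) :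
    M.eval (U ++ V) = M.evalFrom (M.eval U) V :=
  M.evalFrom_of_append _ _ _

lemma intToEuc_add (a b : Fin N → ℤ) : intToEuc (a + b) = intToEuc a + intToEuc b := by
  ext i; simp [intToEuc]

lemma intToEuc_sub (a b : Fin N → ℤ) : intToEuc (a - b) = intToEuc a - intToEuc b := by
  ext i; simp [intToEuc]

lemma intToEuc_nsmul (n : ℕ) (a : Fin N → ℤ) : intToEuc (n • a) = (n : ℝ) • intToEuc a := by
  ext i; simp [intToEuc]

lemma intToEuc_zero : intToEuc (0 : Fin N → ℤ) = 0 := by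
  ext i; simp [intToEuc]

lemma intToEuc_sum {ι : Type*} (S : Finset ι) (a : ι → Fin N → ℤ) :
    intToEuc (∑ q ∈ S, a q) = ∑ q ∈ S, intToEuc (a q) := by
  classical
  induction S using Finset.induction_on with
  | empty => simp [intToEuc_zero]
  | insert q S hq ih => rw [Finset.sum_insert hq, Finset.sum_insert hq, intToEuc_add, ih]

end Words

/-! ### Pumping and cutting loops in the automaton -/

section Automaton

variable {N : ℕ} (B : ZBiautomaticStructure N)

lemma finite_short (n : ℕ) : {g | ∃ W : List B.X, wordSum B.π W = g ∧ W.length ≤ n}.Finite := by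
  have := B.fintypeX
  refine ((List.finite_length_le B.X n).image (wordSum B.π)).subset ?_
  rintro _ ⟨W, rfl, h⟩
  exact ⟨W, h, rfl⟩

/-- Words of the language representing elements that differ by a letter fellow travel: the
differences of their prefixes lie in a fixed finite set. -/
lemma exists_fellow : ∃ F : Set (Fin N → ℤ), F.Finite ∧ ∀ U ∈ B.L, ∀ V ∈ B.L, ∀ y : B.X,
    wordSum B.π U = wordSum B.π V + B.π y →
      ∀ t : ℕ, wordSum B.π (U.take t) - wordSum B.π (V.take t) ∈ F := by
  obtain ⟨lam, h⟩ := B.fellowTraveller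
  obtain ⟨o, ho⟩ := B.hasZero
  refine ⟨_, finite_short B lam, fun U hU V hV y hUV t => ?_⟩
  simpa [ho] using h U hU V hV o y (by rw [ho, zero_add, hUV]) t

variable {B} {σ : Type} {M : DFA B.X σ}

/-- A nonempty loop representing `0` inside an accepted word could be repeated at will. -/
lemma loop_ne_zero (hM : M.accepts = B.L)
    (hfo : B.FiniteToOne) {a b c : List B.X} (hL : a ++ b ++ c ∈ B.L) (hb : b ≠ [])
    (hloop : M.evalFrom (M.eval a) b = M.eval a) : wordSum B.π b ≠ 0 := by
  intro h0
  refine Set.infinite_of_injective_forall_mem (f := fun n : ℕ => a ++ wpow b n ++ c) ?_ ?_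
    (hfo (wordSum B.π (a ++ b ++ c)))
  · intro m n hmn
    have := congrArg List.length hmn
    simpa [hb] using this
  · intro n
    refine ⟨?_, by simp [h0]⟩
    rw [← hM, DFA.mem_accepts, eval_append, eval_append] at hL ⊢
    rwa [evalFrom_wpow M hloop, ← hloop]

/-- Two loops at a live state have the same average velocity: the words `a A^n B^n s` and
`a B^n A^n s`, with `A`, `B` powers of the loops of equal length, represent the same element. -/
lemma loop_velocity (hM : M.accepts = B.L) {a s w w' : List B.X} {q : σ} (hq : M.eval a = q)
    (hs : M.evalFrom q s ∈ M.accept) (hw : M.evalFrom q w = q) (hw' : M.evalFrom q w' = q) :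
    w'.length • wordSum B.π w = w.length • wordSum B.π w' := by
  obtain ⟨F, hF, hfellow⟩ := exists_fellow B
  obtain ⟨o, ho⟩ := B.hasZero
  let A : ℕ → List B.X := wpow (wpow w w'.length)
  let A' : ℕ → List B.X := wpow (wpow w' w.length)
  have hA : ∀ n, M.evalFrom q (A n) = q := fun n => evalFrom_wpow M (evalFrom_wpow M hw _) n
  have hA' : ∀ n, M.evalFrom q (A' n) = q := fun n => evalFrom_wpow M (evalFrom_wpow M hw' _) n
  have h1 : ∀ n, a ++ A n ++ (A' n ++ s) ∈ B.L := by
    intro n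
    rw [← hM, DFA.mem_accepts, eval_append, eval_append, DFA.evalFrom_of_append, hq, hA, hA']
    exact hs
  have h2 : ∀ n, a ++ A' n ++ (A n ++ s) ∈ B.L := by
    intro n
    rw [← hM, DFA.mem_accepts, eval_append, eval_append, DFA.evalFrom_of_append, hq, hA', hA]
    exact hs
  have hlen : ∀ n, (a ++ A n).length = (a ++ A' n).length := by
    intro n
    simp only [A, A', List.length_append, wpow_length]
    ring
  have h3 : ∀ n : ℕ, n • (w'.length • wordSum B.π w - w.length • wordSum B.π w') ∈ F := by
    intro n
    have := hfellow _ (h1 n) _ (h2 n) o (by simp only [wordSum_append, ho]; abel)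
      (a ++ A n).length
    rw [List.take_left, hlen, List.take_left] at this
    simpa [A, A', smul_sub] using this
  by_contra hne
  refine Set.infinite_of_injective_forall_mem (fun m n hmn => ?_) h3 hF
  exact Nat.cast_injective (smul_left_injective ℤ (sub_ne_zero.2 hne) (by simpa using hmn))

/-- The pigeonhole argument behind the length comparison: if `U` is much longer than `V`, then
between times `|V|` and `|U|` the state and the distance to `V̄` recur, so `U` contains a nonempty
loop representing `0`. -/
lemma length_le_of_neighbour [Fintype σ] (hM : M.accepts = B.L) (hfo : B.FiniteToOne) :
    ∃ k : ℕ, ∀ U ∈ B.L, ∀ V ∈ B.L, ∀ y : B.X,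
      wordSum B.π U = wordSum B.π V + B.π y → U.length ≤ V.length + k := by
  obtain ⟨F, hF, hfellow⟩ := exists_fellow B
  refine ⟨Fintype.card σ * hF.toFinset.card, fun U hU V hV y hUV => ?_⟩
  by_contra! hlt
  have hmem := fun t : ℕ => hfellow U hU V hV y hUV (V.length + t)
  simp only [List.take_of_length_le (Nat.le_add_right V.length _)] at hmem
  obtain ⟨i, hi, j, hj, hij, heq⟩ :=
    Finset.exists_ne_map_eq_of_card_lt_of_maps_to
      (s := Finset.range (Fintype.card σ * hF.toFinset.card + 1))
      (t := (Finset.univ : Finset σ) ×ˢ hF.toFinset)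
      (f := fun t => (M.eval (U.take (V.length + t)),
        wordSum B.π (U.take (V.length + t)) - wordSum B.π V))
      (by simp) (fun t _ => by simpa using hmem t)
  have main : ∀ i j : ℕ, i < j → j ≤ Fintype.card σ * hF.toFinset.card →
      (M.eval (U.take (V.length + i)),
        wordSum B.π (U.take (V.length + i)) - wordSum B.π V) =
      (M.eval (U.take (V.length + j)),
        wordSum B.π (U.take (V.length + j)) - wordSum B.π V) → False := by
    intro i j hij hj heq
    obtain ⟨h1, h2⟩ := Prod.ext_iff.1 heq
    have hsplit : U.take (V.length + j) =
        U.take (V.length + i) ++ (U.drop (V.length + i)).take (j - i) := by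
      rw [← List.take_add]; congr 1; omega
    have hU' : U.take (V.length + i) ++ (U.drop (V.length + i)).take (j - i)
        ++ U.drop (V.length + j) = U := by
      rw [← hsplit, List.take_append_drop]
    refine loop_ne_zero hM hfo (a := U.take (V.length + i))
      (b := (U.drop (V.length + i)).take (j - i)) (c := U.drop (V.length + j)) ?_ ?_ ?_ ?_
    · rw [hU']; exact hU
    · rw [← List.length_pos_iff]
      simp only [List.length_take, List.length_drop]
      omega
    · rw [← eval_append, ← hsplit]
      exact h1.symm
    · dsimp only at h2
      rw [hsplit, wordSum_append] at h2
      simpa using h2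
  simp only [Finset.mem_range, Nat.lt_succ_iff] at hi hj
  rcases lt_or_gt_of_ne hij with h | h
  · exact main i j h hj heq
  · exact main j i h hi heq.symm

/-- The length of a word of the language is coarsely Lipschitz in the element it represents. -/
lemma length_lipschitz [Fintype σ] (hM : M.accepts = B.L) (hfo : B.FiniteToOne) :
    ∃ K : ℝ, 0 ≤ K ∧ ∀ U ∈ B.L, ∀ V ∈ B.L, |(U.length : ℝ) - V.length| ≤
      K * (1 + ‖intToEuc (wordSum B.π U) - intToEuc (wordSum B.π V)‖) := by
  obtain ⟨k, hk⟩ := length_le_of_neighbour hM hfo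
  obtain ⟨o, ho⟩ := B.hasZero
  choose r hrL hr using B.represents
  have hk' : ∀ U ∈ B.L, ∀ V ∈ B.L, ∀ y : B.X,
      wordSum B.π U = wordSum B.π V + B.π y → |(U.length : ℝ) - V.length| ≤ k := by
    intro U hU V hV y h
    obtain ⟨y', hy'⟩ := B.symm y
    have h1 : (U.length : ℝ) ≤ V.length + k := by exact_mod_cast hk U hU V hV y h
    have h2 : (V.length : ℝ) ≤ U.length + k := by
      exact_mod_cast hk V hV U hU y' (by rw [h, hy']; abel)
    rw [abs_le]
    constructor <;> linarith
  -- The translations that change the length by a bounded amount form a subgroup.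
  have hall : ∀ s : Fin N → ℤ, ∃ c : ℝ, ∀ g, |((r (g + s)).length : ℝ) - (r g).length| ≤ c := by
    intro s
    have hs : s ∈ AddSubgroup.closure (Set.range B.π) := by rw [B.gen]; trivial
    induction hs using AddSubgroup.closure_induction with
    | mem s hs =>
      obtain ⟨y, rfl⟩ := hs
      exact ⟨k, fun g => hk' _ (hrL _) _ (hrL _) y (by rw [hr, hr])⟩
    | zero => exact ⟨0, fun g => by simp⟩
    | add s t _ _ hs ht =>
      obtain ⟨c, hc⟩ := hs
      obtain ⟨d, hd⟩ := ht
      refine ⟨d + c, fun g => ?_⟩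
      rw [← add_assoc]
      exact (abs_sub_le _ _ _).trans (add_le_add (hd _) (hc _))
    | neg s _ hs =>
      obtain ⟨c, hc⟩ := hs
      refine ⟨c, fun g => ?_⟩
      rw [abs_sub_comm]
      simpa using hc (g + -s)
  choose c hc using hall
  have hc0 : ∀ s, 0 ≤ c s := fun s => (abs_nonneg _).trans (hc s 0)
  have hnat : ∀ (s : Fin N → ℤ) (n : ℕ) g,
      |((r (g + n • s)).length : ℝ) - (r g).length| ≤ n * c s := by
    intro s n
    induction n with
    | zero => simp
    | succ n ih =>
      intro g
      rw [succ_nsmul, ← add_assoc]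
      refine (abs_sub_le _ ((r (g + n • s)).length : ℝ) _).trans ?_
      push_cast
      linarith [hc s (g + n • s), ih g]
  have hint : ∀ (s : Fin N → ℤ) (n : ℤ) g,
      |((r (g + n • s)).length : ℝ) - (r g).length| ≤ |(n : ℝ)| * c s := by
    intro s n g
    obtain ⟨m, rfl | rfl⟩ := n.eq_nat_or_neg
    · simpa using hnat s m g
    · have := hnat s m (g + (-(m : ℤ)) • s)
      rw [abs_sub_comm]
      simpa using this
  let e : Fin N → Fin N → ℤ := fun i => Pi.single i 1
  have hsum : ∀ (S : Finset (Fin N)) (h g : Fin N → ℤ),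
      |((r (g + ∑ i ∈ S, h i • e i)).length : ℝ) - (r g).length| ≤
        ∑ i ∈ S, |(h i : ℝ)| * c (e i) := by
    intro S h
    induction S using Finset.induction_on with
    | empty => simp
    | insert i S hi ih =>
      intro g
      rw [Finset.sum_insert hi, Finset.sum_insert hi, add_comm (h i • e i), ← add_assoc]
      refine (abs_sub_le _ ((r (g + ∑ i ∈ S, h i • e i)).length : ℝ) _).trans ?_
      exact add_le_add (hint _ _ _) (ih g)
  have hC : 0 ≤ ∑ i, c (e i) := Finset.sum_nonneg fun i _ => hc0 _
  refine ⟨k + k + ∑ i, c (e i), by positivity, fun U hU V hV => ?_⟩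
  have h1 := hk' U hU (r (wordSum B.π U)) (hrL _) o (by rw [hr, ho, add_zero])
  have h2 := hk' V hV (r (wordSum B.π V)) (hrL _) o (by rw [hr, ho, add_zero])
  have h3 := hsum Finset.univ (wordSum B.π U - wordSum B.π V) (wordSum B.π V)
  have h4 : ∑ i, (wordSum B.π U - wordSum B.π V) i • e i = wordSum B.π U - wordSum B.π V := by
    ext j
    simp [e, Finset.sum_apply, Pi.single_apply]
  rw [h4, add_sub_cancel] at h3
  have h5 : ∑ i, |(((wordSum B.π U - wordSum B.π V) i : ℤ) : ℝ)| * c (e i) ≤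
      ‖intToEuc (wordSum B.π U) - intToEuc (wordSum B.π V)‖ * ∑ i, c (e i) := by
    rw [Finset.mul_sum]
    refine Finset.sum_le_sum fun i _ => mul_le_mul_of_nonneg_right ?_ (hc0 _)
    have := PiLp.norm_apply_le (intToEuc (wordSum B.π U) - intToEuc (wordSum B.π V)) i
    simpa [intToEuc] using this
  have h6 : 0 ≤ ((k : ℝ) + k) * ‖intToEuc (wordSum B.π U) - intToEuc (wordSum B.π V)‖ := by
    positivity
  rw [abs_le] at *
  constructor <;> nlinarith [h1.1, h1.2, h2.1, h2.2, h3.1, h3.2]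

/-- The run of `M` on `U` passes through the state `q`. -/
def Visits {α τ : Type} (M : DFA α τ) (U : List α) (q : τ) : Prop :=
  ∃ a b, U = a ++ b ∧ M.eval a = q

lemma Visits.insert {τ : Type} {D : DFA B.X τ} {a b c : List B.X}
    (hloop : D.evalFrom (D.eval a) b = D.eval a) {q : τ} (h : Visits D (a ++ c) q) :
    Visits D (a ++ b ++ c) q := by
  obtain ⟨x, y, hxy, hq⟩ := h
  obtain ⟨d, rfl, rfl⟩ | ⟨d, rfl, rfl⟩ := List.append_eq_append_iff.1 hxy
  · refine ⟨a ++ b ++ d, y, by simp, ?_⟩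
    rw [eval_append, eval_append, hloop, ← eval_append, hq]
  · exact ⟨x, d ++ b ++ c, by simp, hq⟩

/-- Powers of chosen loops can be inserted simultaneously at all states visited by a word. -/
lemma insert_loops (hM : M.accepts = B.L)
    {w : σ → List B.X} (hw : ∀ q, M.evalFrom q (w q) = q) {U : List B.X}
    (hU : U ∈ B.L) (S : Finset σ) (hS : ∀ q ∈ S, Visits M U q) (n : σ → ℕ) :
    ∃ U' ∈ B.L, (∀ q, Visits M U q → Visits M U' q) ∧
      wordSum B.π U' = wordSum B.π U + ∑ q ∈ S, n q • wordSum B.π (w q) ∧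
      U'.length = U.length + ∑ q ∈ S, n q * (w q).length := by
  classical
  induction S using Finset.induction_on with
  | empty => exact ⟨U, hU, fun _ h => h, by simp, by simp⟩
  | insert p S hp ih =>
    obtain ⟨U', hU', hvis, hsum, hlen⟩ := ih fun q hq => hS q (Finset.mem_insert_of_mem hq)
    obtain ⟨a, c, rfl, hap⟩ := hvis p (hS p (Finset.mem_insert_self p S))
    have hloop : M.evalFrom (M.eval a) (wpow (w p) (n p)) = M.eval a := by
      rw [hap]; exact evalFrom_wpow M (hw p) _
    refine ⟨a ++ wpow (w p) (n p) ++ c, ?_, fun q hq => (hvis q hq).insert hloop, ?_, ?_⟩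
    · rw [← hM, DFA.mem_accepts, eval_append] at hU' ⊢
      rwa [eval_append, hloop]
    · rw [Finset.sum_insert hp]
      simp only [wordSum_append, wordSum_wpow] at hsum ⊢
      rw [add_right_comm, hsum]
      abel
    · rw [Finset.sum_insert hp]
      simp only [List.length_append, wpow_length] at hlen ⊢
      omega

/-- The average velocity of the chosen loop `w q` (zero if that loop is empty). -/
noncomputable def velocity (B : ZBiautomaticStructure N) (w : σ → List B.X) (q : σ) :
    EuclideanSpace ℝ (Fin N) :=
  ((w q).length : ℝ)⁻¹ • intToEuc (wordSum B.π (w q))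

/-- Any nonnegative combination of velocities along a word of the language is realised by a word
of the language up to an error independent of the coefficients. -/
lemma exists_pump (hM : M.accepts = B.L)
    {w : σ → List B.X} (hw : ∀ q, M.evalFrom q (w q) = q) (S : Finset σ)
    (hS : ∃ U ∈ B.L, ∀ q ∈ S, Visits M U q ∧ w q ≠ []) :
    ∃ K : ℝ, ∀ t : σ → ℝ, (∀ q, 0 ≤ t q) → ∃ U ∈ B.L,
      ‖intToEuc (wordSum B.π U) - ∑ q ∈ S, t q • velocity B w q‖ ≤ K ∧
      |(U.length : ℝ) - ∑ q ∈ S, t q| ≤ K := by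
  obtain ⟨U, hU, hS⟩ := hS
  refine ⟨(U.length + ∑ q ∈ S, ((w q).length : ℝ)) + (‖intToEuc (wordSum B.π U)‖
    + ∑ q ∈ S, (w q).length * ‖velocity B w q‖), fun t ht => ?_⟩
  let n : σ → ℕ := fun q => ⌊t q / (w q).length⌋₊
  obtain ⟨U', hU', -, hsum, hlen⟩ := insert_loops hM hw hU S (fun q hq => (hS q hq).1) n
  have hpos : ∀ q ∈ S, (0 : ℝ) < (w q).length := fun q hq => by
    exact_mod_cast List.length_pos_iff.2 (hS q hq).2
  have herr : ∀ q ∈ S, |(n q : ℝ) * (w q).length - t q| ≤ (w q).length := by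
    intro q hq
    have h1 := Nat.floor_le (div_nonneg (ht q) (hpos q hq).le)
    have h2 := (Nat.lt_floor_add_one (t q / (w q).length)).le
    rw [le_div_iff₀ (hpos q hq)] at h1
    rw [div_le_iff₀ (hpos q hq)] at h2
    rw [abs_le]
    constructor <;> simp only [n] <;> linarith
  refine ⟨U', hU', ?_, ?_⟩
  · refine le_trans ?_ (le_add_of_nonneg_left (by positivity))
    have h1 : intToEuc (wordSum B.π U') - ∑ q ∈ S, t q • velocity B w q =
        intToEuc (wordSum B.π U)
          + ∑ q ∈ S, ((n q : ℝ) * (w q).length - t q) • velocity B w q := by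
      rw [hsum, intToEuc_add, intToEuc_sum, add_sub_assoc, ← Finset.sum_sub_distrib]
      congr 1
      refine Finset.sum_congr rfl fun q hq => ?_
      rw [sub_smul, mul_smul, intToEuc_nsmul]
      conv_rhs => rw [velocity]
      rw [smul_inv_smul₀ (hpos q hq).ne', velocity]
    rw [h1]
    refine (norm_add_le _ _).trans (add_le_add le_rfl ((norm_sum_le _ _).trans ?_))
    refine Finset.sum_le_sum fun q hq => ?_
    rw [norm_smul]
    exact mul_le_mul_of_nonneg_right (herr q hq) (norm_nonneg _)
  · refine le_trans ?_ (le_add_of_nonneg_right (by positivity))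
    have h1 : (U'.length : ℝ) - ∑ q ∈ S, t q =
        U.length + ∑ q ∈ S, ((n q : ℝ) * (w q).length - t q) := by
      rw [hlen, Finset.sum_sub_distrib]
      push_cast
      ring
    rw [h1]
    refine (abs_add_le _ _).trans (add_le_add (by simp) ((Finset.abs_sum_le_sum_abs _ _).trans ?_))
    exact Finset.sum_le_sum herr

/-- Cutting loops out of a word of the language one at a time writes it, up to a remainder of
bounded length, as a nonnegative combination of velocities of states it visits. -/
lemma exists_decomposition [Fintype σ] (hM : M.accepts = B.L)
    {w : σ → List B.X} (hw : ∀ q, M.evalFrom q (w q) = q)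
    (hw' : ∀ q, (∃ u, u ≠ [] ∧ M.evalFrom q u = q) → w q ≠ []) (m : ℕ) :
    ∀ U ∈ B.L, U.length = m → ∃ t : σ → ℝ, (∀ q, 0 ≤ t q) ∧
      (∀ q, t q ≠ 0 → Visits M U q ∧ w q ≠ []) ∧ ∃ R : List B.X, R.length ≤ Fintype.card σ ∧
        intToEuc (wordSum B.π U) = intToEuc (wordSum B.π R) + ∑ q, t q • velocity B w q ∧
        (U.length : ℝ) = R.length + ∑ q, t q := by
  classical
  induction m using Nat.strong_induction_on with
  | _ m ih =>
    rintro U hU rfl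
    by_cases hlen : U.length ≤ Fintype.card σ
    · exact ⟨0, fun _ => le_rfl, by simp, U, hlen, by simp, by simp⟩
    obtain ⟨p, a, b, c, rfl, -, hb, hap, hbp, hcp⟩ :=
      M.evalFrom_split (s := M.start) (not_le.1 hlen).le rfl
    replace hap : M.eval a = p := hap
    have hloop : M.evalFrom (M.eval a) b = M.eval a := by rw [hap, hbp]
    have hacc : M.evalFrom p c ∈ M.accept := by
      rw [← hM, DFA.mem_accepts, eval_append, eval_append, hap, hbp] at hU
      exact hU
    have hac : a ++ c ∈ B.L := by
      rw [← hM, DFA.mem_accepts, eval_append, hap]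
      exact hacc
    obtain ⟨t, ht, hts, R, hR, hsum, hl⟩ := ih (a ++ c).length (by
      have := List.length_pos_iff.2 hb
      simp only [List.length_append]
      omega) _ hac rfl
    have hwp : w p ≠ [] := hw' p ⟨b, hb, hbp⟩
    have hwpos : ((w p).length : ℝ) ≠ 0 := by simpa using hwp
    -- The removed loop moves with the velocity of the chosen loop at the same state.
    have hvel : intToEuc (wordSum B.π b) = (b.length : ℝ) • velocity B w p := by
      have h1 := congrArg intToEuc (loop_velocity hM hap hacc hbp (hw p))
      rw [intToEuc_nsmul, intToEuc_nsmul] at h1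
      rw [velocity, smul_comm, ← h1, inv_smul_smul₀ hwpos]
    refine ⟨fun q => t q + (Pi.single p (b.length : ℝ) : σ → ℝ) q, fun q => ?_,
      fun q hq => ?_, R, hR, ?_, ?_⟩
    · refine add_nonneg (ht q) ?_
      rw [Pi.single_apply]
      split_ifs <;> positivity
    · dsimp only at hq
      by_cases hqp : q = p
      · subst hqp
        exact ⟨⟨a, b ++ c, by simp, hap⟩, hwp⟩
      · rw [Pi.single_eq_of_ne hqp, add_zero] at hq
        exact ⟨(hts q hq).1.insert hloop, (hts q hq).2⟩
    · have h2 : ∑ q, (Pi.single p (b.length : ℝ) : σ → ℝ) q • velocity B w q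
          = (b.length : ℝ) • velocity B w p := by
        rw [Finset.sum_eq_single p (fun q _ hq => by rw [Pi.single_eq_of_ne hq, zero_smul])
          (by simp), Pi.single_eq_same]
      simp only [add_smul, Finset.sum_add_distrib]
      rw [h2, ← hvel]
      simp only [wordSum_append, intToEuc_add] at hsum ⊢
      rw [add_right_comm, hsum]
      abel
    · rw [Finset.sum_add_distrib, Finset.sum_pi_single']
      simp only [List.length_append, Nat.cast_add, Finset.mem_univ, if_true] at hl ⊢
      linarith

end Automaton

/-! ### Length and polyhedral functions -/

/-- To any finite-to-one biautomatic structure on `ℤ^N` one can associate a polyhedral function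
`f : ℝ^N → ℝ` approximating, up to a uniform additive constant `ξ`, the length of a word of the
language in terms of the element it represents. -/
theorem stmt12 {N : ℕ} (B : ZBiautomaticStructure N) (hfo : B.FiniteToOne) :
    ∃ (f : EuclideanSpace ℝ (Fin N) → ℝ) (ξ : ℝ), IsPolyhedral f ∧ 0 ≤ ξ ∧
      ∀ U ∈ B.L, f (intToEuc (wordSum B.π U)) - ξ ≤ (U.length : ℝ) ∧
        (U.length : ℝ) ≤ f (intToEuc (wordSum B.π U)) + ξ := by
  classical
  obtain ⟨σ, _, M, hM⟩ := B.regular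
  have hloops : ∀ q, ∃ w, M.evalFrom q w = q ∧
      ((∃ u, u ≠ [] ∧ M.evalFrom q u = q) → w ≠ []) := by
    intro q
    by_cases h : ∃ u, u ≠ [] ∧ M.evalFrom q u = q
    · obtain ⟨u, hu, hq⟩ := h
      exact ⟨u, hq, fun _ => hu⟩
    · exact ⟨[], rfl, fun h' => absurd h' h⟩
  choose w hw hw' using hloops
  let 𝒮 : Finset (Finset σ) :=
    Finset.univ.filter fun S => ∃ U ∈ B.L, ∀ q ∈ S, Visits M U q ∧ w q ≠ []
  obtain ⟨K₁, hK₁, hlip⟩ := length_lipschitz hM hfo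
  -- Error bounds for pumping and for the remainders, uniform over the finitely many cases.
  have hpump : ∀ S : Finset σ, ∃ K : ℝ, S ∈ 𝒮 → ∀ t : σ → ℝ, (∀ q, 0 ≤ t q) → ∃ U ∈ B.L,
      ‖intToEuc (wordSum B.π U) - ∑ q ∈ S, t q • velocity B w q‖ ≤ K ∧
      |(U.length : ℝ) - ∑ q ∈ S, t q| ≤ K := by
    intro S
    by_cases hS : S ∈ 𝒮
    · obtain ⟨K, hK⟩ := exists_pump hM hw S (Finset.mem_filter.1 hS).2
      exact ⟨K, fun _ => hK⟩
    · exact ⟨0, fun h => absurd h hS⟩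
  choose K₂ hK₂ using hpump
  obtain ⟨K₃, hK₃⟩ := ((finite_short B (Fintype.card σ)).image fun g => ‖intToEuc g‖).bddAbove
  obtain ⟨K₄, hK₄⟩ := (Set.finite_range K₂).bddAbove
  let K : ℝ := max (max K₁ K₄) (max K₃ (Fintype.card σ))
  have h1 : K₁ ≤ K := (le_max_left _ _).trans (le_max_left _ _)
  have h2 : ∀ S, K₂ S ≤ K := fun S =>
    (hK₄ ⟨S, rfl⟩).trans ((le_max_right _ _).trans (le_max_left _ _))
  have h3 : K₃ ≤ K := (le_max_left _ _).trans (le_max_right _ _)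
  have h4 : (Fintype.card σ : ℝ) ≤ K := (le_max_right _ _).trans (le_max_right _ _)
  suffices h : ∃ (f : EuclideanSpace ℝ (Fin N) → ℝ) (ξ : ℝ), IsPolyhedral f ∧ 0 ≤ ξ ∧
      ∀ (g : Fin N → ℤ) (l : ℝ), (∃ U ∈ B.L, wordSum B.π U = g ∧ (U.length : ℝ) = l) →
        f (intToEuc g) - ξ ≤ l ∧ l ≤ f (intToEuc g) + ξ by
    obtain ⟨f, ξ, hf, hξ, hfξ⟩ := h
    exact ⟨f, ξ, hf, hξ, fun U hU => hfξ _ _ ⟨U, hU, rfl, rfl⟩⟩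
  refine polyhedral_of_coarse _ (velocity B w) 𝒮 K (hK₁.trans h1) ?_ ?_ ?_ ?_
  · intro g
    obtain ⟨U, hU, hg⟩ := B.represents g
    exact ⟨_, U, hU, hg, rfl⟩
  · rintro _ _ _ _ ⟨U, hU, rfl, rfl⟩ ⟨V, hV, rfl, rfl⟩
    exact (hlip U hU V hV).trans (by gcongr)
  · rintro _ _ ⟨U, hU, rfl, rfl⟩
    obtain ⟨t, ht, hts, R, hR, hsum, hlen⟩ := exists_decomposition hM hw hw' _ U hU rfl
    refine ⟨Finset.univ.filter fun q => t q ≠ 0, ?_, t, ht, ?_, ?_⟩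
    · exact Finset.mem_filter.2 ⟨Finset.mem_univ _, U, hU, fun q hq =>
        hts q (Finset.mem_filter.1 hq).2⟩
    · have hsupp : ∑ q with t q ≠ 0, t q • velocity B w q = ∑ q, t q • velocity B w q :=
        Finset.sum_filter_of_ne fun q _ h h0 => h (by rw [h0, zero_smul])
      rw [hsupp, hsum, add_sub_cancel_right]
      exact (hK₃ ⟨_, ⟨R, rfl, hR⟩, rfl⟩).trans h3
    · rw [Finset.sum_filter_of_ne fun q _ h => h, hlen, add_sub_cancel_right, Nat.abs_cast]
      exact le_trans (by exact_mod_cast hR) h4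
  · intro S hS t ht
    obtain ⟨U, hU, ha, hb⟩ := hK₂ S hS t ht
    exact ⟨_, _, ⟨U, hU, rfl, rfl⟩, ha.trans (h2 S), hb.trans (h2 S)⟩
end

section
/- Let G be a group with a finite-to-one biautomatic structure (Y, M), let Ĥ ≤ G be a free abelian M-quasiconvex subgroup of finite rank N ≥ 0, and let φ : Ĥ → ℝ^N be an injective group homomorphism (from Ĥ to the additive group ℝ^N) with φ(Ĥ) = ℤ^N. Then there exists a polyhedral function f : ℝ^N → ℝ such that f(φ(h)) = f(φ(g h g⁻¹)) for all g ∈ G and all h ∈ Ĥ ∩ g⁻¹Ĥg. -/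
/-!
Let `ℓ(g)` be the length of any word of the language representing `g`. Because the structure is
finite-to-one, `ℓ` is well defined up to a bounded error, and multiplying by fixed elements on the
left and right changes it by a bounded amount (`abs_length_sub_le_of_mul`): if two fellow-travelling
words had very different lengths, the tail of the longer one would contain a loop of the automaton
representing the identity, which could be repeated to give infinitely many words for one element
(`no_trivial_loop`). Hence `lim ℓ(hⁿ) / n` is invariant under conjugation in `G`, and `f` is chosen
to extend this asymptotic length.

It remains to see that the asymptotic length on `Ĥ ≅ ℤ^N` is given by a polyhedral function. Follow
a language word `W` representing an element of `Ĥ` in the product of the automaton with the set of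
right cosets of `Ĥ`. By quasiconvexity only finitely many states occur. Short loops in this graph
represent elements of `Ĥ`, depending only on the state since `Ĥ` is abelian; they can be inserted
(`insert_loop`), and every long word has one whose removal keeps the same set of visited states
(`remove_loop`). So the pairs (vector, length) of such words form a finite union of translates of
finitely generated monoids in `ℝ^N × ℝ`.

For such a set (`exists_polyhedral_asy`), the cones over the vectors of the generators are the
required cones. Rounding down coefficients shows that every nonnegative real combination of
generators is an asymptotic direction of the set (`asy_cone`), and two asymptotic directions with
the same vector have the same length (`asy_unique`). This gives at once the linear forms on the
cones (`exists_vector_inner_eq`) and their agreement on intersections. The cones are closed and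
rescaled lattice points are dense, so the cones cover `ℝ^N`.
-/

/-- The element of `G` represented by a word over the alphabet `Y`, via the letter map `π`. -/
def wordProd {G : Type*} [Group G] {Y : Type*} (π : Y → G) (U : List Y) : G :=
  (U.map π).prod

/-- A biautomatic structure on a group `G`. -/
structure BiautomaticStructure (G : Type*) [Group G] where
  /-- the alphabet -/
  Y : Type
  fintypeY : Fintype Y
  /-- the letter map -/
  π : Y → G
  inj : Function.Injective π
  symm : ∀ y : Y, ∃ y' : Y, π y' = (π y)⁻¹
  hasOne : ∃ y : Y, π y = 1
  gen : Subgroup.closure (Set.range π) = ⊤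
  /-- the language -/
  M : Language Y
  regular : M.IsRegular
  represents : ∀ g : G, ∃ U ∈ M, wordProd π U = g
  fellowTraveller : ∃ lam : ℕ, ∀ U ∈ M, ∀ V ∈ M, ∀ x y : Y,
    wordProd π U = π x * wordProd π V * π y →
    ∀ t : ℕ, ∃ W : List Y,
      wordProd π W = (wordProd π (U.take t))⁻¹ * π x * wordProd π (V.take t) ∧
      W.length ≤ lam


/-- A subset `S ⊆ G` is `M`-quasiconvex: there is `ν ≥ 0` such that every path in the Cayley
graph labelled by a word of `M` starting and ending in `S` stays in the `ν`-neighbourhood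
of `S`. -/
def MQuasiconvex {G : Type*} [Group G] (B : BiautomaticStructure G) (S : Set G) : Prop :=
  ∃ ν : ℕ, ∀ g ∈ S, ∀ W ∈ B.M, g * wordProd B.π W ∈ S →
    ∀ t : ℕ, ∃ s ∈ S, ∃ P : List B.Y,
      wordProd B.π P = (g * wordProd B.π (W.take t))⁻¹ * s ∧ P.length ≤ ν

/-- A biautomatic structure is finite-to-one if every group element is represented by only
finitely many words of the language. -/
def BiautomaticStructure.FiniteToOne {G : Type*} [Group G] (B : BiautomaticStructure G) : Prop :=
  ∀ g : G, {U | U ∈ B.M ∧ wordProd B.π U = g}.Finite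


open RealInnerProductSpace

/-- The standard lattice `ℤ^N ⊆ ℝ^N` (inside Euclidean space). -/
noncomputable def intLatticeEuc (N : ℕ) : Set (EuclideanSpace ℝ (Fin N)) :=
  Set.range fun w : Fin N → ℤ => (WithLp.equiv 2 (Fin N → ℝ)).symm (fun i => (w i : ℝ))


/-! ### Asymptotic slopes and polyhedral functions -/

/-- `Asy A v r`: the set `A` of (vector, length) pairs stays within bounded distance of the ray
spanned by `(v, r)`. When `A` has the length-comparison property of `asy_unique`, the number `r`
is the asymptotic length per unit step in the direction `v`. -/
def Asy {E : Type*} [NormedAddCommGroup E] [NormedSpace ℝ E] (A : Set (E × ℝ)) (v : E) (r : ℝ) :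
    Prop :=
  ∃ R : ℝ, ∀ n : ℕ, ∃ a ∈ A, ‖a.1 - (n : ℝ) • v‖ ≤ R ∧ |a.2 - n * r| ≤ R

lemma eq_of_nat_mul_bounded {r r' K : ℝ} (h : ∀ n : ℕ, |(n : ℝ) * r - n * r'| ≤ K) : r = r' := by
  by_contra hne
  have hpos : 0 < |r - r'| := abs_pos.mpr (sub_ne_zero.mpr hne)
  obtain ⟨n, hn⟩ := exists_nat_gt (K / |r - r'|)
  have h1 := h n
  rw [← mul_sub, abs_mul, Nat.abs_cast] at h1
  rw [div_lt_iff₀ hpos] at hn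
  linarith

/-- A vector has at most one asymptotic length, provided that lengths in `A` differ by a bounded
amount at bounded distance. -/
lemma asy_unique {E : Type*} [NormedAddCommGroup E] [NormedSpace ℝ E] {A : Set (E × ℝ)}
    (h3 : ∀ R : ℝ, ∃ C : ℝ, ∀ a ∈ A, ∀ a' ∈ A, ‖a.1 - a'.1‖ ≤ R → |a.2 - a'.2| ≤ C)
    {v : E} {r r' : ℝ} (h : Asy A v r) (h' : Asy A v r') : r = r' := by
  obtain ⟨R, hR⟩ := h
  obtain ⟨R', hR'⟩ := h'
  obtain ⟨C, hC⟩ := h3 (R + R')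
  refine eq_of_nat_mul_bounded (K := R + R' + C) fun n => ?_
  obtain ⟨a, ha, ha1, ha2⟩ := hR n
  obtain ⟨a', ha', ha1', ha2'⟩ := hR' n
  have h1 : ‖a.1 - a'.1‖ ≤ R + R' := by
    have : a.1 - a'.1 = (a.1 - (n : ℝ) • v) - (a'.1 - (n : ℝ) • v) := by abel
    rw [this]
    exact (norm_sub_le _ _).trans (add_le_add ha1 ha1')
  have h2 := hC a ha a' ha' h1
  rw [abs_le] at *
  constructor <;> linarith [ha2.1, ha2.2, ha2'.1, ha2'.2, h2.1, h2.2]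

/-- Every nonnegative real combination of generators whose natural combinations can be realised
in `A` (up to a fixed base point) is an asymptotic direction: round the coefficients down. -/
lemma asy_cone {E : Type*} [NormedAddCommGroup E] [NormedSpace ℝ E] {A : Set (E × ℝ)}
    {k : ℕ} (z : Fin k → E × ℝ) (b : E × ℝ)
    (hA : ∀ c : Fin k → ℕ, b + ∑ i, c i • z i ∈ A)
    (c : Fin k → ℝ) (hc : ∀ i, 0 ≤ c i) :
    Asy A (∑ i, c i • (z i).1) (∑ i, c i * (z i).2) := by
  refine ⟨‖b‖ + ∑ i, ‖z i‖, fun n => ⟨_, hA fun i => ⌊(n : ℝ) * c i⌋₊, ?_⟩⟩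
  have key : ‖(b + ∑ i, ⌊(n : ℝ) * c i⌋₊ • z i) - (n : ℝ) • ∑ i, c i • z i‖
      ≤ ‖b‖ + ∑ i, ‖z i‖ := by
    have : (b + ∑ i, ⌊(n : ℝ) * c i⌋₊ • z i) - (n : ℝ) • ∑ i, c i • z i
        = b + ∑ i, ((⌊(n : ℝ) * c i⌋₊ : ℝ) - n * c i) • z i := by
      simp only [sub_smul, Finset.sum_sub_distrib, Finset.smul_sum, smul_smul, Nat.cast_smul_eq_nsmul]
      abel
    rw [this]
    refine (norm_add_le _ _).trans (add_le_add le_rfl ((norm_sum_le _ _).trans ?_))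
    refine Finset.sum_le_sum fun i _ => ?_
    rw [norm_smul]
    refine mul_le_of_le_one_left (norm_nonneg _) ?_
    have h0 : 0 ≤ (n : ℝ) * c i := mul_nonneg n.cast_nonneg (hc i)
    rw [Real.norm_eq_abs, abs_le]
    constructor
    · linarith [Nat.lt_floor_add_one ((n : ℝ) * c i)]
    · linarith [Nat.floor_le h0]
  have e1 : (∑ i, c i • z i).1 = ∑ i, c i • (z i).1 := by simp [Prod.fst_sum]
  have e2 : (∑ i, c i • z i).2 = ∑ i, c i * (z i).2 := by simp [Prod.snd_sum]
  rw [← e1, ← e2]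
  exact ⟨(norm_fst_le _).trans key, (norm_snd_le _).trans key⟩

/-- Prescribed values on finitely many vectors that respect all their linear relations are the
pairings with some vector. -/
lemma exists_vector_inner_eq {N k : ℕ} (z : Fin k → EuclideanSpace ℝ (Fin N)) (l : Fin k → ℝ)
    (h : ∀ c : Fin k → ℝ, ∑ i, c i • z i = 0 → ∑ i, c i * l i = 0) :
    ∃ y : EuclideanSpace ℝ (Fin N), ∀ i, ⟪z i, y⟫ = l i := by
  let Z : (Fin k → ℝ) →ₗ[ℝ] EuclideanSpace ℝ (Fin N) := Fintype.linearCombination ℝ z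
  let L : (Fin k → ℝ) →ₗ[ℝ] ℝ := Fintype.linearCombination ℝ l
  have hL : L ∈ LinearMap.range Z.dualMap := by
    rw [LinearMap.range_dualMap_eq_dualAnnihilator_ker, Submodule.mem_dualAnnihilator]
    intro c hc
    have := h c (by simpa [Z, Fintype.linearCombination_apply] using hc)
    simpa [L, Fintype.linearCombination_apply] using this
  obtain ⟨g, hg⟩ := hL
  refine ⟨(InnerProductSpace.toDual ℝ _).symm (LinearMap.toContinuousLinearMap g), fun i => ?_⟩
  rw [real_inner_comm, InnerProductSpace.toDual_symm_apply]
  have := congrArg (fun F => F (Pi.single i 1)) hg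
  simpa [Z, L, Fintype.linearCombination_apply_single] using this

/-- Closedness of a cone whose generators pair to at least `1` with some vector `y`: pairing
with `y` bounds the coefficients, so that compactness applies. -/
lemma coneOverFam_isClosed {N k : ℕ} (z : Fin k → EuclideanSpace ℝ (Fin N))
    (y : EuclideanSpace ℝ (Fin N)) (hy : ∀ i, 1 ≤ ⟪z i, y⟫) : IsClosed (coneOverFam z) := by
  apply IsSeqClosed.isClosed
  intro x v hx hv
  choose c hc hxc using hx
  obtain ⟨K, hK⟩ := (Metric.isBounded_range_of_tendsto x hv).exists_norm_le
  have hcK : ∀ n, c n ∈ Set.Icc (0 : Fin k → ℝ) (fun _ => K * ‖y‖) := by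
    intro n
    refine ⟨fun i => hc n i, fun i => ?_⟩
    calc c n i ≤ c n i * ⟪z i, y⟫ := le_mul_of_one_le_right (hc n i) (hy i)
      _ ≤ ∑ i, c n i * ⟪z i, y⟫ := Finset.single_le_sum (f := fun i => c n i * ⟪z i, y⟫)
          (fun j _ => mul_nonneg (hc n j) (zero_le_one.trans (hy j))) (Finset.mem_univ i)
      _ = ⟪x n, y⟫ := by simp [hxc n, sum_inner, real_inner_smul_left]
      _ ≤ ‖x n‖ * ‖y‖ := real_inner_le_norm _ _
      _ ≤ K * ‖y‖ := by
          gcongr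
          exact hK _ ⟨n, rfl⟩
  obtain ⟨d, hd, s, hs, hlim⟩ := isCompact_Icc.tendsto_subseq hcK
  refine ⟨d, fun i => hd.1 i, ?_⟩
  have h1 : Filter.Tendsto (fun n => x (s n)) Filter.atTop (nhds v) := hv.comp hs.tendsto_atTop
  have h2 : Filter.Tendsto (fun n => x (s n)) Filter.atTop (nhds (∑ i, d i • z i)) := by
    simp only [hxc]
    refine tendsto_finsetSum _ fun i _ => ?_
    exact ((tendsto_pi_nhds.mp hlim) i).smul_const (z i)
  exact tendsto_nhds_unique h1 h2

lemma exists_lattice_near {N : ℕ} (v : EuclideanSpace ℝ (Fin N)) :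
    ∃ p ∈ intLatticeEuc N, ‖p - v‖ ≤ √N := by
  refine ⟨_, ⟨fun i => ⌊v i⌋, rfl⟩, ?_⟩
  rw [EuclideanSpace.norm_eq]
  apply Real.sqrt_le_sqrt
  calc _ ≤ ∑ i : Fin N, (1 : ℝ) := by
        refine Finset.sum_le_sum fun i _ => ?_
        have h1 := Int.floor_le (v i)
        have h2 := Int.lt_floor_add_one (v i)
        simp only [WithLp.equiv_symm_apply, PiLp.sub_apply, Real.norm_eq_abs, sq_abs]
        nlinarith
    _ = N := by simp

/-- A set `A` of (vector, length) pairs which is a finite union of translates of finitely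
generated monoids, whose lengths are coarsely determined by the vectors, and whose vectors
exhaust the lattice, has a polyhedral asymptotic length function. -/
theorem exists_polyhedral_asy {N : ℕ} {ι : Type*} [Finite ι]
    (A : Set (EuclideanSpace ℝ (Fin N) × ℝ)) (b : ι → EuclideanSpace ℝ (Fin N) × ℝ)
    (L : ι → Set (EuclideanSpace ℝ (Fin N) × ℝ)) (hLfin : ∀ w, (L w).Finite)
    (hLpos : ∀ w, ∀ p ∈ L w, 1 ≤ p.2)
    (h1 : ∀ w, ∀ p ∈ AddSubmonoid.closure (L w), b w + p ∈ A)
    (h2 : ∀ a ∈ A, ∃ w, ∃ p ∈ AddSubmonoid.closure (L w), a = b w + p)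
    (h3 : ∀ R : ℝ, ∃ C : ℝ, ∀ a ∈ A, ∀ a' ∈ A, ‖a.1 - a'.1‖ ≤ R → |a.2 - a'.2| ≤ C)
    (h4 : ∀ p ∈ intLatticeEuc N, ∃ a ∈ A, a.1 = p) :
    ∃ f : EuclideanSpace ℝ (Fin N) → ℝ, IsPolyhedral f ∧ ∀ v, Asy A v (f v) := by
  have hz : ∀ w, ∃ (k : ℕ) (z : Fin k → EuclideanSpace ℝ (Fin N) × ℝ), Set.range z = L w := by
    intro w
    have := (hLfin w).to_subtype
    obtain ⟨k, ⟨e⟩⟩ := Finite.exists_equiv_fin (L w)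
    refine ⟨k, fun i => (e.symm i).1, ?_⟩
    ext p
    exact ⟨fun ⟨i, hi⟩ => hi ▸ (e.symm i).2, fun hp => ⟨e ⟨p, hp⟩, by simp⟩⟩
  choose k z hzr using hz
  have hasy : ∀ w (c : Fin (k w) → ℝ), (∀ i, 0 ≤ c i) →
      Asy A (∑ i, c i • (z w i).1) (∑ i, c i * (z w i).2) := by
    intro w c hc
    refine asy_cone (z w) (b w) (fun c => h1 w _ ?_) c hc
    refine sum_mem fun i _ => AddSubmonoid.nsmul_mem _ (AddSubmonoid.subset_closure ?_) _
    exact hzr w ▸ ⟨i, rfl⟩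
  have hy : ∀ w, ∃ y : EuclideanSpace ℝ (Fin N), ∀ i, ⟪(z w i).1, y⟫ = (z w i).2 := by
    intro w
    refine exists_vector_inner_eq _ _ fun c hc => ?_
    -- split a real relation into its positive and negative parts
    have e1 : ∑ i, (c i)⁺ • (z w i).1 = ∑ i, (c i)⁻ • (z w i).1 := by
      rw [← sub_eq_zero, ← Finset.sum_sub_distrib]
      simpa only [← sub_smul, posPart_sub_negPart] using hc
    have e2 : ∑ i, (c i)⁺ * (z w i).2 = ∑ i, (c i)⁻ * (z w i).2 :=
      asy_unique h3 (hasy w _ fun i => posPart_nonneg _) (e1 ▸ hasy w _ fun i => negPart_nonneg _)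
    rw [← sub_eq_zero, ← Finset.sum_sub_distrib] at e2
    simpa only [← sub_mul, posPart_sub_negPart] using e2
  choose y hy using hy
  have hone : ∀ w i, 1 ≤ ⟪(z w i).1, y w⟫ := fun w i => by
    rw [hy]
    exact hLpos w _ (hzr w ▸ ⟨i, rfl⟩)
  let C : ι → Set (EuclideanSpace ℝ (Fin N)) := fun w => coneOverFam fun i => (z w i).1
  have hCasy : ∀ w, ∀ v ∈ C w, Asy A v ⟪v, y w⟫ := by
    rintro w v ⟨c, hc, rfl⟩
    have := hasy w c hc
    simp only [sum_inner, real_inner_smul_left, hy]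
    exact this
  have hCpos : ∀ w, ∀ v ∈ C w, v ≠ 0 → 0 < ⟪v, y w⟫ := by
    rintro w v ⟨c, hc, rfl⟩ hv
    simp only [sum_inner, real_inner_smul_left]
    have hnn : ∀ i ∈ Finset.univ, 0 ≤ c i * ⟪(z w i).1, y w⟫ := fun i _ =>
      mul_nonneg (hc i) (zero_le_one.trans (hone w i))
    refine lt_of_le_of_ne (Finset.sum_nonneg hnn) fun h0 => hv ?_
    refine Finset.sum_eq_zero fun i hi => ?_
    have := (Finset.sum_eq_zero_iff_of_nonneg hnn).mp h0.symm i hi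
    have hci : c i = 0 := (mul_eq_zero.mp this).resolve_right (by linarith [hone w i])
    simp [hci]
  have hCclo : IsClosed (⋃ w, C w) :=
    isClosed_iUnion_of_finite fun w => coneOverFam_isClosed _ (y w) (hone w)
  have hCsmul : ∀ w (t : ℝ), 0 ≤ t → ∀ v ∈ C w, t • v ∈ C w := by
    rintro w t ht v ⟨c, hc, rfl⟩
    exact ⟨fun i => t * c i, fun i => mul_nonneg ht (hc i), by simp [Finset.smul_sum, smul_smul]⟩
  have hCmem : ∀ w, ∀ p ∈ AddSubmonoid.closure (L w), p.1 ∈ C w := by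
    intro w p hp
    induction hp using AddSubmonoid.closure_induction with
    | mem p hp =>
      rw [← hzr w] at hp
      obtain ⟨i, rfl⟩ := hp
      exact ⟨Pi.single i 1, fun j => by by_cases h : j = i <;> simp [h],
        by simp [Pi.single_apply, ite_smul]⟩
    | zero => exact ⟨0, fun _ => le_rfl, by simp⟩
    | add p q _ _ hp hq =>
      obtain ⟨c, hc, hp⟩ := hp
      obtain ⟨d, hd, hq⟩ := hq
      exact ⟨c + d, fun i => add_nonneg (hc i) (hd i), by
        simp [hp, hq, add_smul, Finset.sum_add_distrib]⟩
  have hcover : ∀ v, ∃ w, v ∈ C w := by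
    intro v
    -- rescaled vectors of elements of `A` near `n • v` lie in the cones, up to base points
    have hn : ∀ n : ℕ, ∃ w, ∃ u ∈ C w, ‖u + (b w).1 - (n : ℝ) • v‖ ≤ √N := by
      intro n
      obtain ⟨p, hp, hpn⟩ := exists_lattice_near ((n : ℝ) • v)
      obtain ⟨a, ha, rfl⟩ := h4 p hp
      obtain ⟨w, q, hq, rfl⟩ := h2 a ha
      exact ⟨w, q.1, hCmem w q hq, by simpa [add_comm] using hpn⟩
    choose w u hu hub using hn
    obtain ⟨K, hK⟩ := (Set.finite_range fun w => ‖(b w).1‖).bddAbove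
    have hlim : Filter.Tendsto (fun n : ℕ => (n : ℝ)⁻¹ • u n) Filter.atTop (nhds v) := by
      rw [tendsto_iff_norm_sub_tendsto_zero]
      have h0 : Filter.Tendsto (fun n : ℕ => (n : ℝ)⁻¹ * (√N + K)) Filter.atTop (nhds 0) := by
        simpa using (tendsto_inv_atTop_nhds_zero_nat (𝕜 := ℝ)).mul_const (√N + K)
      refine tendsto_of_tendsto_of_tendsto_of_le_of_le' tendsto_const_nhds h0
        (Filter.Eventually.of_forall fun n => norm_nonneg _) ?_
      filter_upwards [Filter.eventually_gt_atTop 0] with n hn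
      have hn' : (n : ℝ) ≠ 0 := by positivity
      have e : (n : ℝ)⁻¹ • u n - v = (n : ℝ)⁻¹ • ((u n + (b (w n)).1 - (n : ℝ) • v) - (b (w n)).1) := by
        rw [show u n + (b (w n)).1 - (n : ℝ) • v - (b (w n)).1 = u n - (n : ℝ) • v by abel,
          smul_sub, smul_smul, inv_mul_cancel₀ hn', one_smul]
      rw [e, norm_smul, norm_inv, Real.norm_natCast]
      gcongr
      exact (norm_sub_le _ _).trans (add_le_add (hub n) (hK ⟨w n, rfl⟩))
    have := hCclo.mem_of_tendsto hlim (Filter.Eventually.of_forall fun n =>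
      Set.mem_iUnion.mpr ⟨w n, hCsmul _ _ (by positivity) _ (hu n)⟩)
    exact Set.mem_iUnion.mp this
  choose w hw using hcover
  obtain ⟨m, ⟨e⟩⟩ := Finite.exists_equiv_fin ι
  have hcons : ∀ i j v, v ∈ C i → v ∈ C j → ⟪v, y i⟫ = ⟪v, y j⟫ := fun i j v hi hj =>
    asy_unique h3 (hCasy i v hi) (hCasy j v hj)
  refine ⟨fun v => ⟪v, y (w v)⟫, ⟨m, fun j => C (e.symm j), fun j => y (e.symm j),
    fun j => ⟨_, _, rfl⟩, fun j => hCpos _, ?_, fun i j => hcons _ _, fun v => ?_⟩,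
    fun v => hCasy _ v (hw v)⟩
  · exact Set.eq_univ_of_forall fun v => Set.mem_iUnion.mpr ⟨e (w v), by simpa using hw v⟩
  · have hnn : 0 ≤ ⟪v, y (w v)⟫ := by
      rcases eq_or_ne v 0 with rfl | hv
      · simp
      · exact (hCpos _ v (hw v) hv).le
    have : Nonempty (Fin m) := ⟨e (w v)⟩
    have hle : ∀ j, coneFn (C (e.symm j)) (y (e.symm j)) v ≤ ⟪v, y (w v)⟫ := by
      intro j
      by_cases hj : v ∈ C (e.symm j)
      · simp [coneFn, Set.indicator_of_mem hj, hcons _ _ v hj (hw v)]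
      · simpa [coneFn, Set.indicator_of_notMem hj] using hnn
    refine le_antisymm ?_ (ciSup_le hle)
    refine le_ciSup_of_le ⟨_, Set.forall_mem_range.mpr hle⟩ (e (w v)) ?_
    simp [coneFn, Set.indicator_of_mem (hw v)]

/-! ### Words and lengths -/

section Words

variable {G : Type*} [Group G] {Y : Type} {σ : Type}

lemma wordProd_append (π : Y → G) (U V : List Y) :
    wordProd π (U ++ V) = wordProd π U * wordProd π V := by
  simp [wordProd]

lemma eval_append_s14 (D : DFA Y σ) (a b : List Y) : D.eval (a ++ b) = D.evalFrom (D.eval a) b :=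
  D.evalFrom_of_append _ _ _

lemma eval_append_congr {D : DFA Y σ} {a a' : List Y} (h : D.eval a = D.eval a') (b : List Y) :
    D.eval (a ++ b) = D.eval (a' ++ b) := by
  rw [eval_append_s14, eval_append_s14, h]

/-- In a finite-to-one regular language, a nonempty loop of the automaton on an accepted word
cannot represent the identity: it could be repeated any number of times. -/
lemma no_trivial_loop (π : Y → G) (D : DFA Y σ)
    (hf : ∀ g : G, {U | U ∈ D.accepts ∧ wordProd π U = g}.Finite)
    {a u b : List Y} (hu : u ≠ []) (hloop : D.eval (a ++ u) = D.eval a)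
    (hacc : a ++ b ∈ D.accepts) (h1 : wordProd π u = 1) : False := by
  have hpow : ∀ n : ℕ, ∃ p : List Y, n ≤ p.length ∧ D.eval (a ++ p) = D.eval a ∧
      wordProd π p = 1 := by
    intro n
    induction n with
    | zero => exact ⟨[], le_rfl, by simp, by simp [wordProd]⟩
    | succ n ih =>
      obtain ⟨p, hp, he, hw⟩ := ih
      refine ⟨p ++ u, ?_, ?_, by simp [wordProd_append, hw, h1]⟩
      · have := List.length_pos_iff.mpr hu
        simp only [List.length_append]
        omega
      · rw [← List.append_assoc, eval_append_congr he, hloop]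
  have hfin := (hf (wordProd π (a ++ b))).image List.length
  obtain ⟨K, hK⟩ := hfin.bddAbove
  obtain ⟨p, hp, he, hw⟩ := hpow (K + 1)
  have := hK ⟨a ++ p ++ b, ⟨?_, ?_⟩, rfl⟩
  · simp only [List.length_append] at this
    omega
  · rw [DFA.mem_accepts] at hacc ⊢
    rwa [eval_append_congr he]
  · simp [wordProd_append, hw]

end Words

section Lengths

variable {G : Type*} [Group G] (B : BiautomaticStructure G)

/-- The ball of radius `r` about the identity in the word metric. -/
def wordBall (r : ℕ) : Set G := {g | ∃ W : List B.Y, wordProd B.π W = g ∧ W.length ≤ r}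

lemma wordBall_finite (r : ℕ) : (wordBall B r).Finite := by
  have := B.fintypeY
  refine ((List.finite_length_le B.Y r).image (wordProd B.π)).subset ?_
  rintro g ⟨W, rfl, hW⟩
  exact ⟨W, hW, rfl⟩

/-- If a word `U` of the language were much longer than a word `V` representing a neighbouring
element, then the tail of `U` would fellow-travel the end point of `V`, hence contain a loop of
the automaton representing the identity. -/
lemma length_le_of_adjacent (hfo : B.FiniteToOne) :
    ∃ K : ℕ, ∀ U ∈ B.M, ∀ V ∈ B.M, ∀ x y : B.Y,
      wordProd B.π U = B.π x * wordProd B.π V * B.π y → U.length ≤ V.length + K := by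
  classical
  obtain ⟨σ, _, D, hD⟩ := B.regular
  obtain ⟨lam, hlam⟩ := B.fellowTraveller
  have hT : ((Set.univ : Set σ) ×ˢ wordBall B lam).Finite :=
    Set.finite_univ.prod (wordBall_finite B lam)
  refine ⟨hT.toFinset.card, fun U hU V hV x y hUV => ?_⟩
  by_contra! hlt
  obtain ⟨i, hi, j, hj, hij, heq⟩ := Finset.exists_ne_map_eq_of_card_lt_of_maps_to
    (s := Finset.range (hT.toFinset.card + 1)) (t := hT.toFinset)
    (f := fun i => (D.eval (U.take (V.length + i)),
      (wordProd B.π (U.take (V.length + i)))⁻¹ * B.π x * wordProd B.π V)) (by simp) (by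
      intro i _
      obtain ⟨W, hW, hl⟩ := hlam U hU V hV x y hUV (V.length + i)
      rw [List.take_of_length_le (l := V) (by omega)] at hW
      simpa using ⟨W, hW, hl⟩)
  wlog hlt' : i < j generalizing i j
  · exact this j hj i hi hij.symm heq.symm (by omega)
  simp only [Finset.mem_range] at hi hj
  simp only [Prod.mk.injEq, mul_left_inj, inv_inj] at heq
  set s := V.length + i
  set t := V.length + j
  have hst : U.take t = U.take s ++ (U.drop s).take (t - s) := by
    rw [← List.take_add]
    congr 1
    omega
  refine no_trivial_loop B.π D (a := U.take s) (u := (U.drop s).take (t - s)) (b := U.drop t)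
    (by rw [hD]; exact hfo) ?_ ?_ ?_ ?_
  · rw [← List.length_pos_iff]
    simp only [List.length_take, List.length_drop]
    omega
  · rw [← hst, heq.1]
  · rw [DFA.mem_accepts, eval_append_congr heq.1, List.take_append_drop]
    rwa [← hD] at hU
  · have := heq.2
    rw [hst, wordProd_append] at this
    simpa using this

/-- Multiplying by fixed elements on both sides changes lengths in the language by a bounded
amount. -/
lemma length_le_of_mul (hfo : B.FiniteToOne) (a b : G) :
    ∃ C : ℕ, ∀ U ∈ B.M, ∀ V ∈ B.M, wordProd B.π U = a * wordProd B.π V * b →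
      U.length ≤ V.length + C := by
  obtain ⟨K, hK⟩ := length_le_of_adjacent B hfo
  obtain ⟨e, he⟩ := B.hasOne
  have hleft : ∀ A : List B.Y, ∃ C : ℕ, ∀ U ∈ B.M, ∀ V ∈ B.M,
      wordProd B.π U = wordProd B.π A * wordProd B.π V → U.length ≤ V.length + C := by
    intro A
    induction A with
    | nil =>
      refine ⟨K, fun U hU V hV h => hK U hU V hV e e ?_⟩
      simpa [he, wordProd] using h
    | cons x A ih =>
      obtain ⟨C, hC⟩ := ih
      refine ⟨C + K, fun U hU V hV h => ?_⟩
      obtain ⟨V', hV', hVe⟩ := B.represents (wordProd B.π A * wordProd B.π V)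
      have h1 := hC V' hV' V hV hVe
      have h2 := hK U hU V' hV' x e (by
        rw [hVe, he, h]
        simp [wordProd, mul_assoc])
      omega
  have hright : ∀ A : List B.Y, ∃ C : ℕ, ∀ U ∈ B.M, ∀ V ∈ B.M,
      wordProd B.π U = wordProd B.π V * wordProd B.π A → U.length ≤ V.length + C := by
    intro A
    induction A with
    | nil =>
      refine ⟨K, fun U hU V hV h => hK U hU V hV e e ?_⟩
      simpa [he, wordProd] using h
    | cons x A ih =>
      obtain ⟨C, hC⟩ := ih
      refine ⟨C + K, fun U hU V hV h => ?_⟩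
      obtain ⟨V', hV', hVe⟩ := B.represents (wordProd B.π V * B.π x)
      have h1 := hK V' hV' V hV e x (by rw [hVe, he, one_mul])
      have h2 := hC U hU V' hV' (by
        rw [hVe, h]
        simp [wordProd, mul_assoc])
      omega
  obtain ⟨A, -, rfl⟩ := B.represents a
  obtain ⟨A', -, rfl⟩ := B.represents b
  obtain ⟨C, hC⟩ := hleft A
  obtain ⟨C', hC'⟩ := hright A'
  refine ⟨C + C', fun U hU V hV h => ?_⟩
  obtain ⟨V', hV', hVe⟩ := B.represents (wordProd B.π A * wordProd B.π V)
  have h1 := hC V' hV' V hV hVe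
  have h2 := hC' U hU V' hV' (by rw [hVe, h])
  omega

lemma abs_length_sub_le_of_mul (hfo : B.FiniteToOne) (a b : G) :
    ∃ C : ℕ, ∀ U ∈ B.M, ∀ V ∈ B.M, wordProd B.π U = a * wordProd B.π V * b →
      |(U.length : ℝ) - V.length| ≤ C := by
  obtain ⟨C, hC⟩ := length_le_of_mul B hfo a b
  obtain ⟨C', hC'⟩ := length_le_of_mul B hfo a⁻¹ b⁻¹
  refine ⟨max C C', fun U hU V hV h => ?_⟩
  have h1 := hC U hU V hV h
  have h2 := hC' V hV U hU (by rw [h]; group)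
  rw [abs_le]
  have h3 : U.length ≤ V.length + max C C' := by omega
  have h4 : V.length ≤ U.length + max C C' := by omega
  have h3' : (U.length : ℝ) ≤ V.length + (max C C' : ℕ) := by exact_mod_cast h3
  have h4' : (V.length : ℝ) ≤ U.length + (max C C' : ℕ) := by exact_mod_cast h4
  constructor <;> linarith

end Lengths

/-! ### Loops of words representing elements of an abelian subgroup -/

section Loops

variable {G : Type*} [Group G] {Y : Type} {σ : Type} (π : Y → G) (D : DFA Y σ) (H : Subgroup G)

/-- The language words that represent elements of `H`. -/
def accWords : Set (List Y) := {W | W ∈ D.accepts ∧ wordProd π W ∈ H}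

/-- The state of a word: its automaton state and the right coset of `H` it represents. -/
def cosetState (a : List Y) : σ × Quotient (QuotientGroup.rightRel H) :=
  (D.eval a, Quotient.mk'' (wordProd π a))

/-- The states visited along a word. -/
def visited (W : List Y) : Set (σ × Quotient (QuotientGroup.rightRel H)) :=
  {s | ∃ a b, W = a ++ b ∧ s = cosetState π D H a}

/-- The loops of length at most `m` which can be inserted at some point of `W` without changing
the states. Inserting `u` after the prefix `a` multiplies the represented element on the left by
`a u a⁻¹`, and a loop is recorded as this element of `H` together with the length of `u`. -/
def loops (m : ℕ) (W : List Y) : Set (G × ℕ) :=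
  {p | ∃ a b u, W = a ++ b ∧ cosetState π D H (a ++ u) = cosetState π D H a ∧
    0 < u.length ∧ u.length ≤ m ∧ p = (wordProd π a * wordProd π u * (wordProd π a)⁻¹, u.length)}

variable {π D H}

lemma cosetState_eq {a b : List Y} : cosetState π D H a = cosetState π D H b ↔
    D.eval a = D.eval b ∧ wordProd π b * (wordProd π a)⁻¹ ∈ H := by
  rw [cosetState, cosetState, Prod.mk.injEq, Quotient.eq'', QuotientGroup.rightRel_apply]

lemma cosetState_append_congr {a a' : List Y}
    (h : cosetState π D H a = cosetState π D H a') (b : List Y) :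
    cosetState π D H (a ++ b) = cosetState π D H (a' ++ b) := by
  rw [cosetState_eq] at h ⊢
  refine ⟨eval_append_congr h.1 b, ?_⟩
  convert h.2 using 1
  simp only [wordProd_append]
  group

lemma accWords_congr {W W' : List Y} (h : cosetState π D H W = cosetState π D H W') :
    W ∈ accWords π D H ↔ W' ∈ accWords π D H := by
  rw [cosetState_eq] at h
  simp only [accWords, Set.mem_ofPred_eq, DFA.mem_accepts, h.1]
  refine and_congr_right fun _ => ⟨fun hW => ?_, fun hW => ?_⟩
  · simpa using H.mul_mem h.2 hW
  · simpa using H.mul_mem (H.inv_mem h.2) hW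

lemma conj_mem_of_loop {a u : List Y} (h : cosetState π D H (a ++ u) = cosetState π D H a) :
    wordProd π a * wordProd π u * (wordProd π a)⁻¹ ∈ H := by
  have := H.inv_mem (cosetState_eq.mp h).2
  simpa [wordProd_append, mul_assoc] using this

lemma loops_finite [Finite Y] (m : ℕ) (W : List Y) : (loops π D H m W).Finite := by
  have := ((List.finite_length_le Y W.length).prod (List.finite_length_le Y m)).image
    fun q : List Y × List Y =>
      (wordProd π q.1 * wordProd π q.2 * (wordProd π q.1)⁻¹, q.2.length)
  refine this.subset ?_
  rintro p ⟨a, b, u, rfl, -, -, hm, rfl⟩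
  exact ⟨(a, u), ⟨by simp, hm⟩, rfl⟩

lemma mem_of_mem_loops {m : ℕ} {W : List Y} {p : G × ℕ} (hp : p ∈ loops π D H m W) : p.1 ∈ H := by
  obtain ⟨a, b, u, -, h, -, -, rfl⟩ := hp
  exact conj_mem_of_loop h

/-- The available loops depend only on the visited states: the prefixes reaching a state differ
by an element of `H`, and `H` is abelian. -/
lemma loops_mono (hcomm : ∀ x ∈ H, ∀ y ∈ H, x * y = y * x) {m : ℕ} {W W' : List Y}
    (h : visited π D H W ⊆ visited π D H W') : loops π D H m W ⊆ loops π D H m W' := by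
  rintro p ⟨a, b, u, rfl, hl, h0, hm, rfl⟩
  obtain ⟨a', b', rfl, hs⟩ := h ⟨a, b, rfl, rfl⟩
  refine ⟨a', b', u, rfl, ?_, h0, hm, ?_⟩
  · rw [← cosetState_append_congr hs, hl, hs]
  · have hc := hcomm _ (cosetState_eq.mp hs).2 _ (conj_mem_of_loop hl)
    congr 1
    have e : wordProd π a' * wordProd π u * (wordProd π a')⁻¹
        = (wordProd π a' * (wordProd π a)⁻¹) *
          (wordProd π a * wordProd π u * (wordProd π a)⁻¹) *
          (wordProd π a' * (wordProd π a)⁻¹)⁻¹ := by group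
    rw [e, hc, mul_inv_cancel_right]

/-- An available loop can be inserted into a word representing an element of `H`, keeping all
the states visited before (hence, by `loops_mono`, all available loops). -/
lemma insert_loop {m : ℕ} {W : List Y} (hW : W ∈ accWords π D H) {p : G × ℕ}
    (hp : p ∈ loops π D H m W) :
    ∃ W' ∈ accWords π D H, visited π D H W ⊆ visited π D H W' ∧
      wordProd π W' = p.1 * wordProd π W ∧ W'.length = W.length + p.2 := by
  obtain ⟨a, b, u, rfl, hl, h0, hm, rfl⟩ := hp
  refine ⟨a ++ u ++ b, (accWords_congr (cosetState_append_congr hl b)).mpr hW, ?_, ?_, ?_⟩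
  · rintro s ⟨c, d, hcd, rfl⟩
    rcases List.append_eq_append_iff.mp hcd with ⟨e, rfl, rfl⟩ | ⟨e, rfl, rfl⟩
    · exact ⟨a ++ u ++ e, d, by simp, (cosetState_append_congr hl e).symm⟩
    · exact ⟨c, e ++ u ++ b, by simp, rfl⟩
  · simp [wordProd_append, mul_assoc]
  · simp only [List.length_append]
    omega

/-- A long word representing an element of `H` has a short loop whose removal does not change
the set of visited states: among sufficiently many consecutive blocks, some block visits only
states already seen before the block begins. -/
lemma remove_loop {T : Finset (σ × Quotient (QuotientGroup.rightRel H))}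
    {W : List Y} (hW : W ∈ accWords π D H)
    (hT : visited π D H W ⊆ T) (hlong : (T.card + 1) * (T.card + 1) < W.length) :
    ∃ W' ∈ accWords π D H, visited π D H W ⊆ visited π D H W' ∧
      ∃ p ∈ loops π D H T.card W', wordProd π W = p.1 * wordProd π W' ∧
        W.length = W'.length + p.2 := by
  classical
  set m := T.card
  let st : ℕ → σ × Quotient (QuotientGroup.rightRel H) := fun t => cosetState π D H (W.take t)
  have hstT : ∀ t, st t ∈ T := fun t => hT ⟨W.take t, W.drop t, by simp, rfl⟩
  have hblock : ∃ j ≤ m, ∀ t, j * (m + 1) ≤ t → t < (j + 1) * (m + 1) →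
      ∃ r < j * (m + 1), st r = st t := by
    by_contra! hno
    choose! t ht1 ht2 ht3 using hno
    obtain ⟨i, hi, j, hj, hij, heq⟩ := Finset.exists_ne_map_eq_of_card_lt_of_maps_to
      (s := Finset.range (m + 1)) (t := T) (f := fun j => st (t j))
      (by simp [m]) (fun _ _ => hstT _)
    wlog hlt : i < j generalizing i j
    · exact this j hj i hi hij.symm heq.symm (by omega)
    simp only [Finset.mem_range] at hi hj
    refine ht3 j (by omega) (t i) ?_ heq
    exact (ht2 i (by omega)).trans_le (Nat.mul_le_mul_right _ hlt)
  obtain ⟨j, hj, hold⟩ := hblock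
  obtain ⟨i₁, hi₁, i₂, hi₂, hne, heq⟩ := Finset.exists_ne_map_eq_of_card_lt_of_maps_to
      (s := Finset.range (m + 1)) (t := T) (f := fun i => st (j * (m + 1) + i))
      (by simp [m]) (fun _ _ => hstT _)
  wlog hlt : i₁ < i₂ generalizing i₁ i₂
  · exact this i₂ hi₂ i₁ hi₁ hne.symm heq.symm (by omega)
  simp only [Finset.mem_range] at hi₁ hi₂
  have hjm : (j + 1) * (m + 1) ≤ (m + 1) * (m + 1) := Nat.mul_le_mul_right _ (by omega)
  have hj1 : (j + 1) * (m + 1) = j * (m + 1) + (m + 1) := by ring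
  set s := j * (m + 1) + i₁ with hs
  set t := j * (m + 1) + i₂ with ht
  have hsplit : W.take t = W.take s ++ (W.drop s).take (t - s) := by
    rw [← List.take_add]
    congr 1
    omega
  have hlen : ((W.drop s).take (t - s)).length = t - s := by
    simp only [List.length_take, List.length_drop]
    omega
  have hst : cosetState π D H (W.take s) = cosetState π D H (W.take t) := heq
  have hWeq : W = W.take s ++ (W.drop s).take (t - s) ++ W.drop t := by
    rw [← hsplit, List.take_append_drop]
  refine ⟨W.take s ++ W.drop t, ?_, ?_, _, ⟨W.take s, W.drop t, (W.drop s).take (t - s), rfl,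
    by rw [← hsplit, hst], by omega, by omega, rfl⟩, ?_, ?_⟩
  · rw [accWords_congr (cosetState_append_congr hst _), List.take_append_drop]
    exact hW
  · have hlow : ∀ r ≤ s, st r ∈ visited π D H (W.take s ++ W.drop t) := by
      intro r hr
      refine ⟨W.take r, (W.take s).drop r ++ W.drop t, ?_, rfl⟩
      rw [← List.append_assoc]
      congr 1
      conv_lhs => rw [← List.take_append_drop r (W.take s)]
      rw [List.take_take, min_eq_left hr]
    rintro x ⟨c, d, hcd, rfl⟩
    have hc : c = W.take c.length := by simp [hcd]
    rw [hc]
    rcases le_or_gt c.length s with h | h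
    · exact hlow _ h
    rcases lt_or_ge c.length t with h' | h'
    · obtain ⟨r, hr, hre⟩ := hold c.length (by omega) (by omega)
      change st _ ∈ _
      rw [← hre]
      exact hlow r (by omega)
    · have e : W.take c.length = W.take t ++ (W.drop t).take (c.length - t) := by
        rw [← List.take_add]
        congr 1
        omega
      refine ⟨W.take s ++ (W.drop t).take (c.length - t), (W.drop t).drop (c.length - t), ?_, ?_⟩
      · rw [List.append_assoc, List.take_append_drop]
      · rw [e]
        exact (cosetState_append_congr hst _).symm
  · conv_lhs => rw [hWeq]
    simp only [wordProd_append]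
    group
  · conv_lhs => rw [hWeq]
    simp only [List.length_append]
    omega

end Loops

/-! ### Invariance under conjugation -/

/-- Given a finite-to-one biautomatic structure `(Y, M)` on `G`, a free abelian `M`-quasiconvex
subgroup `Ĥ ≤ G` of rank `N`, identified with the lattice `ℤ^N ⊆ ℝ^N` via `φ`, there is a
polyhedral function `f : ℝ^N → ℝ` with `f(φ(h)) = f(φ(g h g⁻¹))` for all `g ∈ G` and all
`h ∈ Ĥ ∩ g⁻¹ Ĥ g`. -/
theorem stmt14 {G : Type*} [Group G] (B : BiautomaticStructure G) (hfo : B.FiniteToOne)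
    {N : ℕ} (Hhat : Subgroup G) (hqc : MQuasiconvex B (Hhat : Set G))
    (φ : ↥Hhat → EuclideanSpace ℝ (Fin N))
    (hhom : ∀ a b : ↥Hhat, φ (a * b) = φ a + φ b)
    (hinj : Function.Injective φ)
    (hrange : Set.range φ = intLatticeEuc N) :
    ∃ f : EuclideanSpace ℝ (Fin N) → ℝ, IsPolyhedral f ∧
      ∀ g : G, ∀ h : ↥Hhat, ∀ hmem : g * (h : G) * g⁻¹ ∈ Hhat,
        f (φ h) = f (φ ⟨g * (h : G) * g⁻¹, hmem⟩) := by
  classical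
  obtain ⟨σ, _, D, hD⟩ := B.regular
  have := B.fintypeY
  obtain ⟨ν, hν⟩ := hqc
  have hcomm : ∀ x ∈ Hhat, ∀ y ∈ Hhat, x * y = y * x := by
    intro x hx y hy
    have : φ (⟨x, hx⟩ * ⟨y, hy⟩) = φ (⟨y, hy⟩ * ⟨x, hx⟩) := by rw [hhom, hhom, add_comm]
    exact congrArg Subtype.val (hinj this)
  -- `φ` extended by zero to `G`
  let Φ : G → EuclideanSpace ℝ (Fin N) := fun g => if h : g ∈ Hhat then φ ⟨g, h⟩ else 0
  have hΦ : ∀ h : Hhat, Φ h = φ h := fun h => by simp [Φ]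
  have hΦmul : ∀ x ∈ Hhat, ∀ y ∈ Hhat, Φ (x * y) = Φ x + Φ y := by
    intro x hx y hy
    simpa using (hΦ (⟨x, hx⟩ * ⟨y, hy⟩)).trans
      ((hhom _ _).trans (congrArg₂ _ (hΦ ⟨x, hx⟩).symm (hΦ ⟨y, hy⟩).symm))
  have hφpow : ∀ (h : Hhat) (n : ℕ), φ (h ^ n) = (n : ℝ) • φ h := by
    intro h n
    induction n with
    | zero =>
      have := hhom 1 1
      simpa using this
    | succ n ih => rw [pow_succ, hhom, ih, Nat.cast_succ, add_smul, one_smul]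
  -- by quasiconvexity only finitely many states are visited
  have hTfin : ((Set.univ : Set σ) ×ˢ ((fun g : G =>
      (Quotient.mk'' g⁻¹ : Quotient (QuotientGroup.rightRel Hhat))) '' wordBall B ν)).Finite :=
    Set.finite_univ.prod ((wordBall_finite B ν).image _)
  set T := hTfin.toFinset
  have hT : ∀ W ∈ accWords B.π D Hhat, visited B.π D Hhat W ⊆ T := by
    rintro W ⟨hW, hWH⟩ s ⟨a, b, rfl, rfl⟩
    rw [hD] at hW
    obtain ⟨s, hs, P, hP, hPν⟩ := hν 1 Hhat.one_mem (a ++ b) hW (by simpa using hWH) a.length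
    simp only [T, Set.Finite.coe_toFinset]
    refine ⟨Set.mem_univ _, wordProd B.π P, ⟨P, rfl, hPν⟩, ?_⟩
    simp only [cosetState]
    rw [Quotient.eq'', QuotientGroup.rightRel_apply, hP]
    simpa using hs
  set m := T.card
  let Ψ : G × ℕ → EuclideanSpace ℝ (Fin N) × ℝ := fun p => (Φ p.1, p.2)
  let pt : List B.Y → EuclideanSpace ℝ (Fin N) × ℝ := fun W => (Φ (wordProd B.π W), W.length)
  have hpt : ∀ W ∈ accWords B.π D Hhat, ∀ W' ∈ accWords B.π D Hhat, ∀ p : G × ℕ, p.1 ∈ Hhat →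
      wordProd B.π W' = p.1 * wordProd B.π W → W'.length = W.length + p.2 →
      pt W' = pt W + Ψ p := by
    intro W hW W' hW' p hp h1 h2
    simp only [pt, Ψ, h1, h2, hΦmul _ hp _ hW.2, Prod.mk_add_mk, Nat.cast_add, add_comm]
  have hinsert : ∀ W ∈ accWords B.π D Hhat,
      ∀ p ∈ AddSubmonoid.closure (Ψ '' loops B.π D Hhat m W), ∃ W' ∈ accWords B.π D Hhat,
        visited B.π D Hhat W ⊆ visited B.π D Hhat W' ∧ pt W' = pt W + p := by
    intro W hW p hp
    induction hp using AddSubmonoid.closure_induction_right with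
    | zero => exact ⟨W, hW, subset_rfl, by simp⟩
    | add_right x hx y hy ih =>
      obtain ⟨q, hq, rfl⟩ := hy
      obtain ⟨W', hW', hv, he⟩ := ih
      have hq' := loops_mono hcomm hv hq
      obtain ⟨W'', hW'', hv', h1, h2⟩ := insert_loop hW' hq'
      exact ⟨W'', hW'', hv.trans hv', by
        rw [hpt W' hW' W'' hW'' q (mem_of_mem_loops hq') h1 h2, he, add_assoc]⟩
  have hdecomp : ∀ n : ℕ, ∀ W ∈ accWords B.π D Hhat, W.length = n →
      ∃ W₀ ∈ accWords B.π D Hhat, W₀.length ≤ (m + 1) * (m + 1) ∧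
        visited B.π D Hhat W ⊆ visited B.π D Hhat W₀ ∧
        ∃ p ∈ AddSubmonoid.closure (Ψ '' loops B.π D Hhat m W₀), pt W = pt W₀ + p := by
    intro n
    induction n using Nat.strong_induction_on with
    | _ n ih =>
      intro W hW hn
      rcases le_or_gt W.length ((m + 1) * (m + 1)) with hle | hgt
      · exact ⟨W, hW, hle, subset_rfl, 0, zero_mem _, by simp⟩
      · obtain ⟨W', hW', hv, q, hq, h1, h2⟩ := remove_loop hW (hT W hW) hgt
        have hq0 : 0 < q.2 := by
          obtain ⟨a, b, u, -, -, h0, -, rfl⟩ := hq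
          exact h0
        obtain ⟨W₀, hW₀, hl, hv', p, hp, he⟩ := ih W'.length (by omega) W' hW' rfl
        refine ⟨W₀, hW₀, hl, hv.trans hv', p + Ψ q, add_mem hp
          (AddSubmonoid.subset_closure ⟨q, loops_mono hcomm hv' hq, rfl⟩), ?_⟩
        rw [hpt W' hW' W hW q (mem_of_mem_loops hq) h1 h2, he, add_assoc]
  let A : Set (EuclideanSpace ℝ (Fin N) × ℝ) := pt '' accWords B.π D Hhat
  have hword : ∀ h : Hhat, ∃ W ∈ accWords B.π D Hhat, wordProd B.π W = h := by
    intro h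
    obtain ⟨W, hW, he⟩ := B.represents h
    exact ⟨W, ⟨by rwa [hD], he ▸ h.2⟩, he⟩
  -- lattice balls are finite, so lengths vary by a bounded amount at bounded distance
  have h3 : ∀ R : ℝ, ∃ C : ℝ, ∀ a ∈ A, ∀ a' ∈ A, ‖a.1 - a'.1‖ ≤ R → |a.2 - a'.2| ≤ C := by
    intro R
    have hfin : {h : Hhat | ‖φ h‖ ≤ R}.Finite := by
      refine Set.Finite.of_finite_image (f := φ) ?_ hinj.injOn
      refine ((Set.finite_Icc (fun _ : Fin N => -⌈R⌉) (fun _ => ⌈R⌉)).image fun w : Fin N → ℤ =>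
        (WithLp.equiv 2 (Fin N → ℝ)).symm (fun i => (w i : ℝ))).subset ?_
      rintro _ ⟨h, hh, rfl⟩
      obtain ⟨w, hw⟩ : φ h ∈ intLatticeEuc N := hrange ▸ ⟨h, rfl⟩
      refine ⟨w, ?_, hw⟩
      have hb : ∀ i, |(w i : ℝ)| ≤ R := by
        intro i
        have h1 := (PiLp.norm_apply_le (φ h) i).trans hh
        have e : φ h i = w i := by
          rw [← hw]
          rfl
        rwa [e, Real.norm_eq_abs] at h1
      have hc := Int.le_ceil R
      refine ⟨fun i => ?_, fun i => ?_⟩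
      · have := (abs_le.mp (hb i)).1
        have : (-⌈R⌉ : ℝ) ≤ w i := by linarith
        exact_mod_cast this
      · have := (abs_le.mp (hb i)).2
        have : (w i : ℝ) ≤ ⌈R⌉ := by linarith
        exact_mod_cast this
    choose C hC using fun d : Hhat => abs_length_sub_le_of_mul B hfo 1 (d : G)
    obtain ⟨K, hK⟩ := (hfin.image fun d => (C d : ℝ)).bddAbove
    refine ⟨K, ?_⟩
    rintro _ ⟨U, ⟨hU, hUH⟩, rfl⟩ _ ⟨V, ⟨hV, hVH⟩, rfl⟩ hUV
    rw [hD] at hU hV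
    have hdH := Hhat.mul_mem (Hhat.inv_mem hVH) hUH
    have he : wordProd B.π U = 1 * wordProd B.π V * ((wordProd B.π V)⁻¹ * wordProd B.π U) := by
      group
    refine (hC ⟨_, hdH⟩ U hU V hV he).trans (hK ⟨_, ?_, rfl⟩)
    have hd := hΦmul _ hVH _ hdH
    rw [mul_inv_cancel_left] at hd
    have : φ ⟨_, hdH⟩ = Φ (wordProd B.π U) - Φ (wordProd B.π V) := by
      rw [hd, add_sub_cancel_left, ← hΦ]
    change ‖φ ⟨_, hdH⟩‖ ≤ R
    rw [this]
    exact hUV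
  have hιfin : {W | W ∈ accWords B.π D Hhat ∧ W.length ≤ (m + 1) * (m + 1)}.Finite :=
    (List.finite_length_le B.Y _).subset fun W hW => hW.2
  have := hιfin.to_subtype
  obtain ⟨f, hf, hfA⟩ := exists_polyhedral_asy A
    (fun W : {W | W ∈ accWords B.π D Hhat ∧ W.length ≤ (m + 1) * (m + 1)} => pt W)
    (fun W => Ψ '' loops B.π D Hhat m W) (fun W => (loops_finite m _).image _) (by
      rintro W _ ⟨_, ⟨a, b, u, -, -, h0, -, rfl⟩, rfl⟩
      simpa [Ψ, Nat.succ_le_iff] using h0) (by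
      rintro ⟨W, hW, hl⟩ p hp
      obtain ⟨W', hW', -, he⟩ := hinsert W hW p hp
      exact ⟨W', hW', he⟩) (by
      rintro _ ⟨W, hW, rfl⟩
      obtain ⟨W₀, hW₀, hl, -, p, hp, he⟩ := hdecomp _ W hW rfl
      exact ⟨⟨W₀, hW₀, hl⟩, p, hp, he⟩) h3 (by
      intro p hp
      obtain ⟨h, rfl⟩ : p ∈ Set.range φ := hrange ▸ hp
      obtain ⟨W, hW, he⟩ := hword h
      exact ⟨_, ⟨W, hW, rfl⟩, by simp [pt, he, hΦ]⟩)
  -- `f (φ h)` is the asymptotic length of the powers of `h`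
  have hpow : ∀ h : Hhat, ∃ K : ℝ, ∀ n : ℕ, ∀ V ∈ accWords B.π D Hhat,
      wordProd B.π V = (h : G) ^ n → |(V.length : ℝ) - n * f (φ h)| ≤ K := by
    intro h
    obtain ⟨R, hR⟩ := hfA (φ h)
    obtain ⟨C, hC⟩ := h3 R
    refine ⟨C + R, fun n V hV he => ?_⟩
    obtain ⟨a, ha, ha1, ha2⟩ := hR n
    have hV1 : (pt V).1 = (n : ℝ) • φ h := by
      rw [← hφpow, ← hΦ]
      simp [pt, he]
    have h1 := hC a ha (pt V) ⟨V, hV, rfl⟩ (by rwa [hV1])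
    change |a.2 - V.length| ≤ C at h1
    rw [abs_le] at *
    constructor <;> linarith [h1.1, h1.2, ha2.1, ha2.2]
  refine ⟨f, hf, fun g h hmem => ?_⟩
  set h' : Hhat := ⟨g * h * g⁻¹, hmem⟩ with hh'
  obtain ⟨K, hK⟩ := hpow h
  obtain ⟨K', hK'⟩ := hpow h'
  obtain ⟨C, hC⟩ := abs_length_sub_le_of_mul B hfo g g⁻¹
  refine eq_of_nat_mul_bounded (K := K + K' + C) fun n => ?_
  obtain ⟨V, hV, hVe⟩ := hword (h ^ n)
  obtain ⟨V', hV', hVe'⟩ := hword (h' ^ n)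
  rw [Subgroup.coe_pow] at hVe hVe'
  have h1 := hK n V hV hVe
  have h2 := hK' n V' hV' hVe'
  have h3 := hC V' (hD ▸ hV'.1) V (hD ▸ hV.1) (by rw [hVe, hVe', hh', conj_pow])
  rw [abs_le] at *
  constructor <;> linarith [h1.1, h1.2, h2.1, h2.2, h3.1, h3.2]
end
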